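/- arXiv:1212.1134 — 12 statements merged into one kernel-verified Lean document; each statement's English description precedes it below -/
import Mathlib

section
/- For all j, k ≥ 0 one has 𝔖(𝔗_{2j}(X)·𝔗_k(X)) = (D_j/D_{j−1})·δ_{2j+1,k}, where δ is the Kronecker delta. In particular 𝔖(𝔗_0·𝔗_0) = 0. -/
open Polynomial MeasureTheory

/-!
The identity is a statement about the moment functional `L p = ∫ p dμ`. By linearity
`𝔖 (q(X²)) = 0` and `𝔖 (X · q(X²)) = L q` for every polynomial `q`, so `𝔖 (𝔗_{2j} 𝔗_{2k})` vanishes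
and `𝔖 (𝔗_{2j} 𝔗_{2k+1}) = L (P_j P_k)`. Orthogonality kills the latter for `j ≠ k`. For `j = k`
it gives `L (P_j²) = L (P_j X^j)`, which `hankel_det_succ` identifies as a ratio of Hankel
determinants: the Hankel matrix sends the coefficient vector of `P_j` to the vector
`(L (P_j X^i))_i`, which is supported in the last entry, and applying the adjugate and reading off
the last entry yields `D_j = D_{j-1} · L (P_j X^j)`.
-/

/-- If the monic polynomial `p` of degree `j` is orthogonal to all lower powers with respect to
the functional `L`, then consecutive Hankel determinants of `L` differ by the factor
`L (p * X ^ j)`. -/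
lemma hankel_det_succ (L : ℝ[X] →ₗ[ℝ] ℝ) (p : ℝ[X]) (j : ℕ) (hp : p.Monic)
    (hdeg : p.natDegree = j) (horth : ∀ k < j, L (p * X ^ k) = 0) :
    (Matrix.of fun i k : Fin (j + 1) => L (X ^ (i.1 + k.1))).det =
      (Matrix.of fun i k : Fin j => L (X ^ (i.1 + k.1))).det * L (p * X ^ j) := by
  set H : Matrix (Fin (j + 1)) (Fin (j + 1)) ℝ :=
    Matrix.of fun i k : Fin (j + 1) => L (X ^ (i.1 + k.1)) with hH
  set c : Fin (j + 1) → ℝ := fun i => p.coeff i with hc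
  have hHc : H.mulVec c = Pi.single (Fin.last j) (L (p * X ^ j)) := by
    have hrow : ∀ i, H.mulVec c i = L (p * X ^ i.1) := by
      intro i
      conv_rhs => rw [p.as_sum_range_C_mul_X_pow, hdeg, Finset.sum_mul, map_sum,
        ← Fin.sum_univ_eq_sum_range (fun m => L (C (p.coeff m) * X ^ m * X ^ i.1))]
      simp only [Matrix.mulVec, dotProduct, hH, hc, Matrix.of_apply]
      refine Finset.sum_congr rfl fun k _ => ?_
      rw [mul_assoc, ← pow_add, ← smul_eq_C_mul, map_smul, smul_eq_mul, mul_comm, add_comm i.1]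
    ext i
    rw [hrow]
    by_cases hi : i = Fin.last j
    · subst hi; simp
    · rw [Pi.single_eq_of_ne hi]
      exact horth _ (Fin.val_lt_last hi)
  have hadj : H.adjugate.mulVec (H.mulVec c) = H.det • c := by
    rw [Matrix.mulVec_mulVec, Matrix.adjugate_mul, Matrix.smul_mulVec, Matrix.one_mulVec]
  have hlast := congrFun hadj (Fin.last j)
  have hcl : c (Fin.last j) = 1 := by
    have := hp.coeff_natDegree
    rwa [hdeg] at this
  rw [hHc, Matrix.mulVec_single, Pi.smul_apply, Pi.smul_apply, op_smul_eq_mul, smul_eq_mul,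
    hcl, mul_one] at hlast
  rw [← hlast]
  simp [Matrix.adjugate_fin_succ_eq_det_submatrix, hH, ← two_mul, Matrix.submatrix]

/-- A functional that kills `p * X ^ k` for all `k < j` kills `p * q` for `deg q < j`, and on
`p * q` with `q` monic of degree `j` it only sees the leading term of `q`. -/
lemma orth_mul (L : ℝ[X] →ₗ[ℝ] ℝ) (p : ℝ[X]) (j : ℕ)
    (horth : ∀ k < j, L (p * X ^ k) = 0) (q : ℝ[X]) (hq : q.natDegree ≤ j) :
    L (p * q) = q.coeff j * L (p * X ^ j) := by
  conv_lhs => rw [q.as_sum_range_C_mul_X_pow' (Nat.lt_succ_of_le hq)]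
  have hterm : ∀ m, L (p * (C (q.coeff m) * X ^ m)) = q.coeff m * L (p * X ^ m) := by
    intro m
    rw [mul_left_comm, ← smul_eq_C_mul, map_smul, smul_eq_mul]
  rw [Finset.mul_sum, map_sum, Finset.sum_range_succ, Finset.sum_eq_zero, zero_add, hterm]
  intro m hm
  rw [hterm, horth m (Finset.mem_range.1 hm), mul_zero]

/-- For all `j, k ≥ 0` one has
`𝔖(𝔗_{2j}·𝔗_k) = (D_j / D_{j-1}) · δ_{2j+1,k}`.
Here `D (n+1)` is the Hankel determinant of order `n` and `D 0 = 1` plays the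
role of `D_{-1}`. -/
theorem stmt_0
    (μ : Measure ℝ) [IsProbabilityMeasure μ]
    (hint : ∀ j : ℕ, Integrable (fun t : ℝ => t ^ j) μ)
    (s : ℕ → ℝ) (hs : ∀ j, s j = ∫ t, t ^ j ∂μ)
    (D : ℕ → ℝ) (hD0 : D 0 = 1)
    (hD : ∀ n : ℕ, D (n + 1) = (Matrix.of fun i k : Fin (n + 1) => s (i.1 + k.1)).det)
    (hDpos : ∀ n, 0 < D n)
    (P : ℕ → Polynomial ℝ)
    (hPmonic : ∀ j, (P j).Monic) (hPdeg : ∀ j, (P j).natDegree = j)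
    (hPorth : ∀ j k : ℕ, k < j → ∫ t, (P j).eval t * t ^ k ∂μ = 0)
    (S : Polynomial ℝ →ₗ[ℝ] ℝ)
    (hSeven : ∀ j : ℕ, S (X ^ (2 * j)) = 0)
    (hSodd : ∀ j : ℕ, S (X ^ (2 * j + 1)) = s j)
    (T : ℕ → Polynomial ℝ)
    (hTeven : ∀ j, T (2 * j) = (P j).comp (X ^ 2))
    (hTodd : ∀ j, T (2 * j + 1) = X * (P j).comp (X ^ 2)) :
    ∀ j k : ℕ, S (T (2 * j) * T k) = (D (j + 1) / D j) * (if 2 * j + 1 = k then 1 else 0) := by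
  -- The moment functional, realised through `S` as `q ↦ S (X * q(X²))`.
  let L : ℝ[X] →ₗ[ℝ] ℝ :=
    S ∘ₗ LinearMap.mulLeft ℝ (X : ℝ[X]) ∘ₗ (Polynomial.aeval (X ^ 2 : ℝ[X])).toLinearMap
  have hL : ∀ q, L q = S (X * q.comp (X ^ 2)) := fun q => rfl
  have hLX : ∀ n, L (X ^ n) = s n := by
    intro n
    rw [hL, X_pow_comp, ← pow_mul, ← pow_succ', hSodd]
  have hcomp : ∀ q : ℝ[X], S (q.comp (X ^ 2)) = 0 := by
    intro q
    induction q using Polynomial.induction_on' with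
    | add p q hp hq => rw [add_comp, map_add, hp, hq, add_zero]
    | monomial n a =>
      rw [monomial_comp, ← smul_eq_C_mul, map_smul, ← pow_mul, hSeven, smul_zero]
  have hLint : ∀ q : ℝ[X], Integrable (fun t => q.eval t) μ ∧ ∫ t, q.eval t ∂μ = L q := by
    intro q
    induction q using Polynomial.induction_on' with
    | add p q hp hq =>
      simp only [eval_add, map_add]
      exact ⟨hp.1.add hq.1, by rw [integral_add hp.1 hq.1, hp.2, hq.2]⟩
    | monomial n a =>
      simp only [eval_monomial]
      refine ⟨(hint n).const_mul a, ?_⟩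
      rw [integral_const_mul, ← hs, ← hLX, ← smul_eq_mul, ← map_smul, smul_X_eq_monomial]
  have horth : ∀ j, ∀ k < j, L (P j * X ^ k) = 0 := by
    intro j k hk
    rw [← (hLint _).2, ← hPorth j k hk]
    simp
  have hlt : ∀ j k, k < j → L (P j * P k) = 0 := by
    intro j k hk
    rw [orth_mul L (P j) j (horth j) (P k) (by rw [hPdeg]; exact hk.le),
      coeff_eq_zero_of_natDegree_lt (by rwa [hPdeg]), zero_mul]
  have hnorm : ∀ j, L (P j * P j) = D (j + 1) / D j := by
    intro j
    have hlead : (P j).coeff j = 1 := by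
      have := (hPmonic j).coeff_natDegree
      rwa [hPdeg] at this
    rw [orth_mul L (P j) j (horth j) (P j) (hPdeg j).le, hlead, one_mul,
      eq_div_iff (hDpos j).ne', mul_comm, hD]
    have hdet := hankel_det_succ L (P j) j (hPmonic j) (hPdeg j) (horth j)
    simp only [hLX] at hdet
    rw [hdet]
    congr 1
    cases j with
    | zero => rw [hD0, Matrix.det_fin_zero]
    | succ n => rw [hD]
  intro j k
  obtain ⟨m, rfl | rfl⟩ := Nat.even_or_odd' k
  · rw [if_neg (by omega), mul_zero, hTeven, hTeven, ← mul_comp, hcomp]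
  · rw [hTeven, hTodd, mul_left_comm, ← mul_comp, ← hL]
    rcases lt_trichotomy j m with h | rfl | h
    · rw [if_neg (by omega), mul_zero, mul_comm, hlt m j h]
    · rw [if_pos rfl, mul_one, hnorm]
    · rw [if_neg (by omega), mul_zero, hlt j m h]
end

section
/- For all j, k ≥ 0 one has 𝔖(𝔗_{2j+1}(X)·𝔗_k(X)) = (D_j/D_{j−1})·δ_{2j,k}, where δ is the Kronecker delta. -/
/-!
The functional `L q = 𝔖(X · q(X²))` is integration against `μ`, since both send `X ^ n` to `s n`
(`integral_eval_eq`), while `𝔖` kills every `q(X²)`. Since `𝔗_{2j+1} 𝔗_{2m} = X · (P_j P_m)(X²)` and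
`𝔗_{2j+1} 𝔗_{2m+1} = (X P_j P_m)(X²)`, everything reduces to `L (P_j P_m)`, which vanishes
for `j ≠ m` by orthogonality.

For the norms, the Hankel matrix `H` is the Gram matrix of the monomials. If `A` is the unitriangular
matrix of coefficients of the `P_i`, then `A H Aᵀ` is the diagonal Gram matrix of the `P_i`, so
`D_{n-1} = ∏_{i < n} L (P_i ^ 2)` (`hankel_det_eq_prod`), and the quotient of two consecutive
determinants is `L (P_j ^ 2)`.
-/

open Polynomial MeasureTheory

/-- A linear functional with the moments of `μ` is integration against `μ`. -/
lemma integral_eval_eq (μ : Measure ℝ) (hint : ∀ j : ℕ, Integrable (fun t : ℝ => t ^ j) μ)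
    (L : ℝ[X] →ₗ[ℝ] ℝ) (hL : ∀ j : ℕ, L (X ^ j) = ∫ t, t ^ j ∂μ) (q : ℝ[X]) :
    Integrable (fun t => q.eval t) μ ∧ ∫ t, q.eval t ∂μ = L q := by
  induction q using Polynomial.induction_on' with
  | add p q hp hq =>
    simp only [eval_add, map_add]
    exact ⟨hp.1.add hq.1, by rw [integral_add hp.1 hq.1, hp.2, hq.2]⟩
  | monomial n a =>
    simp only [eval_monomial]
    refine ⟨(hint n).const_mul a, ?_⟩
    rw [integral_const_mul, ← hL, ← C_mul_X_pow_eq_monomial, ← smul_eq_C_mul, map_smul, smul_eq_mul]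

/-- A bilinear expansion of `L (p * q)` in moments. -/
lemma apply_mul_eq_sum (L : ℝ[X] →ₗ[ℝ] ℝ) {n : ℕ} {p q : ℝ[X]} (hp : p.natDegree < n)
    (hq : q.natDegree < n) :
    L (p * q) = ∑ a : Fin n, ∑ b : Fin n, p.coeff a * L (X ^ (a.1 + b.1)) * q.coeff b := by
  conv_lhs => rw [p.as_sum_range_C_mul_X_pow' hp, q.as_sum_range_C_mul_X_pow' hq]
  rw [Finset.sum_mul_sum, map_sum, Finset.sum_range]
  refine Finset.sum_congr rfl fun a _ => ?_
  rw [map_sum, Finset.sum_range]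
  refine Finset.sum_congr rfl fun b _ => ?_
  have h : C (p.coeff a) * X ^ a.1 * (C (q.coeff b) * X ^ b.1)
      = (p.coeff a * q.coeff b) • (X ^ (a.1 + b.1) : ℝ[X]) := by
    rw [smul_eq_C_mul, C_mul, pow_add]; ring
  rw [h, map_smul, smul_eq_mul]; ring

/-- The Hankel determinant is the product of the squared norms of the monic orthogonal
polynomials, because the passage from monomials to the `P i` is unitriangular. -/
lemma hankel_det_eq_prod (L : ℝ[X] →ₗ[ℝ] ℝ) (P : ℕ → ℝ[X])
    (hPmonic : ∀ j, (P j).Monic) (hPdeg : ∀ j, (P j).natDegree = j)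
    (horth : ∀ i k, i ≠ k → L (P i * P k) = 0) (n : ℕ) :
    (Matrix.of fun i k : Fin n => L (X ^ (i.1 + k.1))).det
      = ∏ i ∈ Finset.range n, L (P i * P i) := by
  set H := Matrix.of fun i k : Fin n => L (X ^ (i.1 + k.1)) with hH
  let A : Matrix (Fin n) (Fin n) ℝ := Matrix.of fun i k => (P i).coeff k
  have hA : A.det = 1 := by
    rw [Matrix.det_of_lowerTriangular]
    · refine Finset.prod_eq_one fun i _ => ?_
      have := (hPmonic i).coeff_natDegree
      rwa [hPdeg] at this
    · intro i k hik
      refine coeff_eq_zero_of_natDegree_lt ?_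
      rw [hPdeg]
      exact hik
  have hdiag : A * H * A.transpose = Matrix.diagonal fun i : Fin n => L (P i * P i) := by
    ext i k
    have h : (A * H * A.transpose) i k = L (P i * P k) := by
      rw [apply_mul_eq_sum L ((hPdeg i).trans_lt i.2) ((hPdeg k).trans_lt k.2),
        Finset.sum_comm]
      simp only [Matrix.mul_apply, Finset.sum_mul]
      rfl
    rw [h, Matrix.diagonal_apply]
    split_ifs with hik
    · rw [hik]
    · exact horth i k fun e => hik (Fin.ext e)
  have := congrArg Matrix.det hdiag
  rw [Matrix.det_mul, Matrix.det_mul, Matrix.det_transpose, hA, Matrix.det_diagonal, one_mul,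
    mul_one] at this
  rw [this, Finset.prod_range]

/-- For all `j, k ≥ 0` one has
`𝔖(𝔗_{2j+1}·𝔗_k) = (D_j / D_{j-1}) · δ_{2j,k}`.
Here `D (n+1)` is the Hankel determinant of order `n` and `D 0 = 1` plays the
role of `D_{-1}`. -/
theorem stmt_1
    (μ : Measure ℝ) [IsProbabilityMeasure μ]
    (hint : ∀ j : ℕ, Integrable (fun t : ℝ => t ^ j) μ)
    (s : ℕ → ℝ) (hs : ∀ j, s j = ∫ t, t ^ j ∂μ)
    (D : ℕ → ℝ) (hD0 : D 0 = 1)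
    (hD : ∀ n : ℕ, D (n + 1) = (Matrix.of fun i k : Fin (n + 1) => s (i.1 + k.1)).det)
    (hDpos : ∀ n, 0 < D n)
    (P : ℕ → Polynomial ℝ)
    (hPmonic : ∀ j, (P j).Monic) (hPdeg : ∀ j, (P j).natDegree = j)
    (hPorth : ∀ j k : ℕ, k < j → ∫ t, (P j).eval t * t ^ k ∂μ = 0)
    (S : Polynomial ℝ →ₗ[ℝ] ℝ)
    (hSeven : ∀ j : ℕ, S (X ^ (2 * j)) = 0)
    (hSodd : ∀ j : ℕ, S (X ^ (2 * j + 1)) = s j)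
    (T : ℕ → Polynomial ℝ)
    (hTeven : ∀ j, T (2 * j) = (P j).comp (X ^ 2))
    (hTodd : ∀ j, T (2 * j + 1) = X * (P j).comp (X ^ 2)) :
    ∀ j k : ℕ, S (T (2 * j + 1) * T k) = (D (j + 1) / D j) * (if 2 * j = k then 1 else 0) := by
  -- `L q = 𝔖(X · q(X²))`
  let L : ℝ[X] →ₗ[ℝ] ℝ :=
    S ∘ₗ LinearMap.mulLeft ℝ X ∘ₗ (aeval (X ^ 2 : ℝ[X])).toLinearMap
  have hLdef : ∀ q : ℝ[X], S (X * q.comp (X ^ 2)) = L q := fun q => by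
    simp [L, comp_eq_aeval]
  have hLX : ∀ n : ℕ, L (X ^ n) = s n := fun n => by
    rw [← hLdef, ← hSodd, X_pow_comp, ← pow_mul, ← pow_succ']
  have hS0 : ∀ q : ℝ[X], S (q.comp (X ^ 2)) = 0 := fun q => by
    induction q using Polynomial.induction_on' with
    | add p q hp hq => rw [add_comp, map_add, hp, hq, add_zero]
    | monomial n a =>
      rw [monomial_comp, ← pow_mul, ← smul_eq_C_mul, map_smul, hSeven, smul_zero]
  have hLint : ∀ q : ℝ[X], ∫ t, q.eval t ∂μ = L q := fun q =>
    (integral_eval_eq μ hint L (fun j => (hLX j).trans (hs j)) q).2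
  have hlt : ∀ i k : ℕ, k < i → L (P i * P k) = 0 := fun i k hki => by
    rw [(P k).as_sum_range_C_mul_X_pow, hPdeg, Finset.mul_sum, map_sum]
    refine Finset.sum_eq_zero fun a ha => ?_
    have ha' : a < i := by rw [Finset.mem_range] at ha; omega
    have h0 : L (P i * X ^ a) = 0 := by
      rw [← hLint, ← hPorth i a ha']
      simp
    rw [mul_left_comm, ← smul_eq_C_mul, map_smul, h0, smul_zero]
  have horth : ∀ i k : ℕ, i ≠ k → L (P i * P k) = 0 := fun i k hik => by
    rcases lt_or_gt_of_ne hik with h | h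
    · rw [mul_comm]; exact hlt k i h
    · exact hlt i k h
  have hDprod : ∀ n, D n = ∏ i ∈ Finset.range n, L (P i * P i) := fun n => by
    cases n with
    | zero => simpa using hD0
    | succ n =>
      rw [hD, ← hankel_det_eq_prod L P hPmonic hPdeg horth]
      simp only [hLX]
  intro j k
  rcases Nat.even_or_odd' k with ⟨m, rfl | rfl⟩
  · rw [hTodd, hTeven, mul_assoc, ← mul_comp, hLdef]
    by_cases hjm : j = m
    · subst hjm
      have hne := (hDpos j).ne'
      rw [if_pos rfl, mul_one, eq_div_iff hne, hDprod (j + 1), Finset.prod_range_succ, ← hDprod,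
        mul_comm]
    · rw [if_neg (by omega), mul_zero, horth j m hjm]
  · have h : X * (P j).comp (X ^ 2) * (X * (P m).comp (X ^ 2))
        = (X * P j * P m).comp (X ^ 2) := by
      rw [mul_comp, mul_comp, X_comp]; ring
    rw [hTodd, hTodd, h, hS0, if_neg (by omega), mul_zero]
end

section
/- For every j ≥ 0: 𝔖(𝔗_{2j}(X)·X^k) = (D_j/D_{j−1})·δ_{2j+1,k} for all integers 0 ≤ k ≤ 2j+1, and 𝔖(𝔗_{2j+1}(X)·X^k) = (D_j/D_{j−1})·δ_{2j,k} for all integers 0 ≤ k ≤ 2j. -/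
/-!
Since `P_j(X²) X^k` expands into monomials `X^(2i+k)`, the functional `𝔖` vanishes on it for even
`k`, and for `k = 2m+1` it returns `∑ i, (coeff of P_j at i) * s (i + m) = ∫ P_j(t) t^m dμ`. By
orthogonality this is zero for `m < j`, so only the norm `h_j = ∫ P_j(t) t^j dμ` has to be
identified with `D_j / D_{j-1}`. The Hankel matrix of order `j` sends the coefficient vector of
`P_j` to `h_j` times the last basis vector; multiplying by the adjugate and reading off the last
entry gives `D_{j-1} h_j = D_j` because `P_j` is monic (`hankel_det_eq`). The odd polynomials reduce
to the even ones through `𝔗_{2j+1} X^k = 𝔗_{2j} X^(k+1)`.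
-/

open Polynomial MeasureTheory

/-- If a vector `c` with last entry `1` is sent by the Hankel matrix of order `n` to `h` times the
last basis vector, then that matrix has determinant `h` times the preceding Hankel determinant
(the rule of Cramer). -/
lemma hankel_det_eq (s : ℕ → ℝ) (n : ℕ) (c : ℕ → ℝ) (hc : c n = 1) (h : ℝ)
    (hlt : ∀ k < n, ∑ i ∈ Finset.range (n + 1), c i * s (i + k) = 0)
    (heq : ∑ i ∈ Finset.range (n + 1), c i * s (i + n) = h) :
    (Matrix.of fun i k : Fin (n + 1) => s (i.1 + k.1)).det =
      (Matrix.of fun i k : Fin n => s (i.1 + k.1)).det * h := by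
  set M : Matrix (Fin (n + 1)) (Fin (n + 1)) ℝ := Matrix.of fun i k => s (i.1 + k.1) with hM
  have hMc : M.mulVec (fun i => c i.1) = Pi.single (Fin.last n) h := by
    ext k
    have hsum : M.mulVec (fun i => c i.1) k = ∑ i ∈ Finset.range (n + 1), c i * s (i + k.1) := by
      rw [Finset.sum_range]
      simp only [Matrix.mulVec, dotProduct, hM, Matrix.of_apply]
      exact Finset.sum_congr rfl fun i _ => by rw [mul_comm, add_comm k.1]
    rw [hsum]
    by_cases hk : k = Fin.last n
    · subst hk
      simpa using heq
    · rw [Pi.single_eq_of_ne hk]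
      exact hlt _ (Fin.val_lt_last hk)
  have hadj : (M.adjugate.mulVec (M.mulVec fun i => c i.1)) (Fin.last n) = M.det := by
    rw [Matrix.mulVec_mulVec, Matrix.adjugate_mul, Matrix.smul_mulVec, Matrix.one_mulVec]
    simp [hc]
  rw [← hadj, hMc, Matrix.mulVec_single, Pi.smul_apply, Matrix.col_apply,
    Matrix.adjugate_fin_succ_eq_det_submatrix]
  have hsub : M.submatrix (Fin.last n).succAbove (Fin.last n).succAbove =
      Matrix.of fun i k : Fin n => s (i.1 + k.1) := by
    ext i k
    simp [hM]
  rw [hsub]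
  simp [← two_mul]

/-- For every `j ≥ 0`:
`𝔖(𝔗_{2j}·X^k) = (D_j/D_{j-1})·δ_{2j+1,k}` for `0 ≤ k ≤ 2j+1`, and
`𝔖(𝔗_{2j+1}·X^k) = (D_j/D_{j-1})·δ_{2j,k}` for `0 ≤ k ≤ 2j`.
Here `D (n+1)` is the Hankel determinant of order `n` and `D 0 = 1` plays the
role of `D_{-1}`. -/
theorem stmt_2
    (μ : Measure ℝ) [IsProbabilityMeasure μ]
    (hint : ∀ j : ℕ, Integrable (fun t : ℝ => t ^ j) μ)
    (s : ℕ → ℝ) (hs : ∀ j, s j = ∫ t, t ^ j ∂μ)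
    (D : ℕ → ℝ) (hD0 : D 0 = 1)
    (hD : ∀ n : ℕ, D (n + 1) = (Matrix.of fun i k : Fin (n + 1) => s (i.1 + k.1)).det)
    (hDpos : ∀ n, 0 < D n)
    (P : ℕ → Polynomial ℝ)
    (hPmonic : ∀ j, (P j).Monic) (hPdeg : ∀ j, (P j).natDegree = j)
    (hPorth : ∀ j k : ℕ, k < j → ∫ t, (P j).eval t * t ^ k ∂μ = 0)
    (S : Polynomial ℝ →ₗ[ℝ] ℝ)
    (hSeven : ∀ j : ℕ, S (X ^ (2 * j)) = 0)
    (hSodd : ∀ j : ℕ, S (X ^ (2 * j + 1)) = s j)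
    (T : ℕ → Polynomial ℝ)
    (hTeven : ∀ j, T (2 * j) = (P j).comp (X ^ 2))
    (hTodd : ∀ j, T (2 * j + 1) = X * (P j).comp (X ^ 2)) :
    ∀ j : ℕ,
      (∀ k : ℕ, k ≤ 2 * j + 1 →
        S (T (2 * j) * X ^ k) = (D (j + 1) / D j) * (if 2 * j + 1 = k then 1 else 0)) ∧
      (∀ k : ℕ, k ≤ 2 * j →
        S (T (2 * j + 1) * X ^ k) = (D (j + 1) / D j) * (if 2 * j = k then 1 else 0)) := by
  have hint_eval : ∀ j k, ∫ t, (P j).eval t * t ^ k ∂μ =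
      ∑ i ∈ Finset.range (j + 1), (P j).coeff i * s (i + k) := by
    intro j k
    have hfun : (fun t : ℝ => (P j).eval t * t ^ k) =
        fun t => ∑ i ∈ Finset.range (j + 1), (P j).coeff i * t ^ (i + k) := by
      ext t
      rw [eval_eq_sum_range, hPdeg, Finset.sum_mul]
      exact Finset.sum_congr rfl fun i _ => by ring
    rw [hfun, integral_finsetSum _ fun i _ => (hint (i + k)).const_mul _]
    exact Finset.sum_congr rfl fun i _ => by rw [integral_const_mul, hs]
  have horth : ∀ j k, k < j →
      ∑ i ∈ Finset.range (j + 1), (P j).coeff i * s (i + k) = 0 := fun j k hk => by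
    rw [← hint_eval, hPorth j k hk]
  have hlead : ∀ j, (P j).coeff j = 1 := fun j => by
    simpa [Polynomial.Monic, Polynomial.leadingCoeff, hPdeg] using hPmonic j
  have hnorm : ∀ j, ∑ i ∈ Finset.range (j + 1), (P j).coeff i * s (i + j) =
      D (j + 1) / D j := by
    intro j
    have hDj : D j = (Matrix.of fun i k : Fin j => s (i.1 + k.1)).det := by
      cases j with
      | zero => simp [hD0]
      | succ n => exact hD n
    rw [eq_div_iff (hDpos j).ne', hD j, hDj, mul_comm]
    exact (hankel_det_eq s j (P j).coeff (hlead j) _ (horth j) rfl).symm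
  have hS : ∀ j k, S ((P j).comp (X ^ 2) * X ^ k) =
      ∑ i ∈ Finset.range (j + 1), (P j).coeff i * S (X ^ (2 * i + k)) := by
    intro j k
    have hexp : (P j).comp (X ^ 2) * X ^ k =
        ∑ i ∈ Finset.range (j + 1), (P j).coeff i • (X : ℝ[X]) ^ (2 * i + k) := by
      rw [comp, eval₂_eq_sum_range, hPdeg, Finset.sum_mul]
      exact Finset.sum_congr rfl fun i _ => by rw [smul_eq_C_mul]; ring
    rw [hexp, map_sum]
    simp
  have heven : ∀ j k, k ≤ 2 * j + 1 → S ((P j).comp (X ^ 2) * X ^ k) =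
      (D (j + 1) / D j) * (if 2 * j + 1 = k then 1 else 0) := by
    intro j k hk
    rw [hS]
    obtain ⟨m, rfl | rfl⟩ := Nat.even_or_odd' k
    · rw [if_neg (by omega), mul_zero]
      exact Finset.sum_eq_zero fun i _ => by rw [← mul_add, hSeven, mul_zero]
    · have hsum : ∀ i, S (X ^ (2 * i + (2 * m + 1))) = s (i + m) := fun i => by
        rw [← hSodd]; congr 2; ring
      simp only [hsum]
      rcases (show m ≤ j by omega).lt_or_eq with hm | rfl
      · rw [if_neg (by omega), mul_zero, horth j m hm]
      · rw [if_pos rfl, mul_one, hnorm]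
  intro j
  refine ⟨fun k hk => by rw [hTeven]; exact heven j k hk, fun k hk => ?_⟩
  have hshift : T (2 * j + 1) * X ^ k = (P j).comp (X ^ 2) * X ^ (k + 1) := by
    rw [hTodd]; ring
  rw [hshift, heven j (k + 1) (by omega)]
  simp
end

section
/- Define u_n = −P_{n+1}(0)/P_n(0) for n ≥ 0 (well defined since P_n(0) ≠ 0), l_0 = 0 and l_{n+1} = c_n/u_n. Then for all n ≥ 0: u_n > 0, l_{n+1} > 0, b_n = u_n + l_n, and c_n = l_{n+1}·u_n. (These identities express the LU factorization J = LU of the monic Jacobi matrix J with diagonal b_n, superdiagonal 1 and subdiagonal c_n, where L is unit lower bidiagonal with subdiagonal l_{n+1} and U is upper bidiagonal with diagonal u_n and superdiagonal 1.) -/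
/-!
By the sign rule `(-1)^j P_j(0) > 0`, consecutive values at `0` have opposite signs, so `u_n > 0`,
and then `l_{n+1} = c_n / u_n > 0`. Evaluating the three-term recurrence at `0` and substituting
`P_{n+1}(0) = -u_n P_n(0)` and `c_n = l_{n+1} u_n` gives `b_n P_n(0) = (u_n + l_n) P_n(0)`;
cancelling `P_n(0) ≠ 0` yields `b_n = u_n + l_n`.
-/

open Polynomial MeasureTheory

/-- with `u_n = -P_{n+1}(0)/P_n(0)`, `l_0 = 0`, `l_{n+1} = c_n/u_n`,
one has `u_n > 0`, `l_{n+1} > 0`, `b_n = u_n + l_n` and `c_n = l_{n+1}·u_n`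
(the LU factorization `J = LU` of the monic Jacobi matrix). -/
theorem stmt_4
    (μ : Measure ℝ) [IsProbabilityMeasure μ]
    (hsupp : ∀ᵐ t ∂μ, 0 ≤ t)
    (hint : ∀ j : ℕ, Integrable (fun t : ℝ => t ^ j) μ)
    (s : ℕ → ℝ) (hs : ∀ j, s j = ∫ t, t ^ j ∂μ)
    (hDpos : ∀ n : ℕ, 0 < (Matrix.of fun i k : Fin (n + 1) => s (i.1 + k.1)).det)
    (P : ℕ → Polynomial ℝ)
    (hPmonic : ∀ j, (P j).Monic) (hPdeg : ∀ j, (P j).natDegree = j)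
    (hPorth : ∀ j k : ℕ, k < j → ∫ t, (P j).eval t * t ^ k ∂μ = 0)
    (b c : ℕ → ℝ) (hc : ∀ j, 0 < c j)
    (hrec0 : X * P 0 = P 1 + C (b 0) * P 0)
    (hrec : ∀ j : ℕ, X * P (j + 1) = P (j + 2) + C (b (j + 1)) * P (j + 1) + C (c j) * P j)
    (hP0 : ∀ j : ℕ, 0 < (-1 : ℝ) ^ j * (P j).eval 0)
    (u : ℕ → ℝ) (hu : ∀ n, u n = -((P (n + 1)).eval 0) / (P n).eval 0)
    (l : ℕ → ℝ) (hl0 : l 0 = 0) (hl : ∀ n, l (n + 1) = c n / u n) :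
    ∀ n : ℕ, 0 < u n ∧ 0 < l (n + 1) ∧ b n = u n + l n ∧ c n = l (n + 1) * u n := by
  have hne : ∀ n, (P n).eval 0 ≠ 0 := fun n h => by simpa [h] using hP0 n
  have hupos : ∀ n, 0 < u n := fun n => by
    -- `u n` is the quotient of two positive numbers after inserting the signs `(-1) ^ n`.
    have hquot := div_pos (hP0 (n + 1)) (hP0 n)
    have hsign : (-1 : ℝ) ^ n ≠ 0 := pow_ne_zero _ (by norm_num)
    rwa [pow_succ, mul_assoc, mul_div_mul_left _ _ hsign, neg_one_mul, ← hu] at hquot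
  have hstep : ∀ n, (P (n + 1)).eval 0 = -(u n * (P n).eval 0) := fun n => by
    rw [hu, div_mul_cancel₀ _ (hne n), neg_neg]
  have hcl : ∀ n, c n = l (n + 1) * u n := fun n => by
    rw [hl, div_mul_cancel₀ _ (hupos n).ne']
  refine fun n => ⟨hupos n, hl n ▸ div_pos (hc n) (hupos n), ?_, hcl n⟩
  cases n with
  | zero =>
    have h := congrArg (eval 0) hrec0
    simp only [eval_mul, eval_add, eval_X, eval_C, zero_mul] at h
    apply mul_right_cancel₀ (hne 0)
    linear_combination -h - hstep 0 - (P 0).eval 0 * hl0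
  | succ m =>
    have h := congrArg (eval 0) (hrec m)
    simp only [eval_mul, eval_add, eval_X, eval_C, zero_mul] at h
    apply mul_right_cancel₀ (hne (m + 1))
    -- `c m * P m (0) = l (m + 1) * u m * P m (0) = -l (m + 1) * P (m + 1) (0)`.
    linear_combination -h - hstep (m + 1) - (P m).eval 0 * hcl m - l (m + 1) * hstep m
end

section
/- Define the linear functional 𝔖̃ : ℝ[X] → ℝ by 𝔖̃(f) = 𝔖(X·f), and define 𝔗̃_{2j}(X) = P_j(X²) and 𝔗̃_{2j+1}(X) = X·P̃_j(X²). Then each 𝔗̃_n is monic of degree n, 𝔖̃(𝔗̃_m·𝔗̃_n) = 0 whenever m ≠ n, and 𝔖̃(𝔗̃_n²) > 0 for every n ≥ 0. (This is the orthogonality of the polynomials produced by the extended Darboux transformation 𝔍 = 𝔏𝔘 ↦ 𝔘𝔏, whose associated function is λ·S(λ²).) -/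
/-!
Write `L f = ∫ f dμ`. The moments of `S` say that `S` kills every polynomial in `X²` and that
`S (X · f(X²)) = L f`. Hence, for `𝔖̃ f = S (X f)`:

* the even-odd pairings vanish, being values of `S` on polynomials in `X²`;
* the even-even pairings are `L (P_i P_j)`, which vanish for `i ≠ j`; for `i = j` they are
  positive, because `L (P_j²) = 0` would put the coefficient vector of `P_j` in the kernel of the
  Hankel matrix of order `j` (`orthogonal_norm_ne_zero`);
* the odd-odd pairings are `L (X P̃_i P̃_j)`. As `X P̃_j = P_{j+1} - c_j P_j` with
  `c_j = P_{j+1}(0) / P_j(0) < 0`, this vanishes for `i < j` and equals `-c_j L (P_j²) > 0` for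
  `i = j`.
-/

open Polynomial MeasureTheory

section Orthogonality

variable (L : ℝ[X] →ₗ[ℝ] ℝ) {p q : ℝ[X]} {j : ℕ}

lemma orthogonal_of_degree_lt (horth : ∀ k < j, L (p * X ^ k) = 0) (hq : q.degree < j) :
    L (p * q) = 0 := by
  by_cases h0 : q = 0
  · simp [h0]
  have hn : q.natDegree < j := (natDegree_lt_iff_degree_lt h0).2 hq
  rw [q.as_sum_range_C_mul_X_pow' hn, Finset.mul_sum, map_sum]
  refine Finset.sum_eq_zero fun k hk => ?_
  have : p * (C (q.coeff k) * X ^ k) = q.coeff k • (p * X ^ k) := by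
    rw [smul_eq_C_mul]; ring
  rw [this, map_smul, horth k (Finset.mem_range.1 hk), smul_zero]

/-- Pairing with an orthogonal polynomial only sees the leading term. -/
lemma orthogonal_mul_monic (hp : p.Monic) (hpd : p.natDegree = j)
    (horth : ∀ k < j, L (p * X ^ k) = 0) (hq : q.Monic) (hqd : q.natDegree = j) :
    L (p * q) = L (p * p) := by
  have hdeg : (q - p).degree < j := by
    have hqj : q.degree = j := by rw [degree_eq_natDegree hq.ne_zero, hqd]
    have hpj : p.degree = j := by rw [degree_eq_natDegree hp.ne_zero, hpd]
    rw [← hqj]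
    exact degree_sub_lt_left (hqj.trans hpj.symm) hq.ne_zero (by rw [hq.leadingCoeff, hp.leadingCoeff])
  have := orthogonal_of_degree_lt L horth hdeg
  rwa [mul_sub, map_sub, sub_eq_zero] at this

/-- If `L (p²) = 0`, then `p` is orthogonal to all powers up to `X ^ j`, so its coefficient vector
is a nonzero element of the kernel of the Hankel matrix. -/
lemma orthogonal_norm_ne_zero {s : ℕ → ℝ} (hL : ∀ k, L (X ^ k) = s k)
    (hdet : (Matrix.of fun i k : Fin (j + 1) => s (i.1 + k.1)).det ≠ 0)
    (hp : p.Monic) (hpd : p.natDegree = j) (horth : ∀ k < j, L (p * X ^ k) = 0) :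
    L (p * p) ≠ 0 := by
  intro h0
  have hall : ∀ k < j + 1, L (p * X ^ k) = 0 := by
    intro k hk
    rcases Nat.lt_succ_iff_lt_or_eq.1 hk with h | rfl
    · exact horth k h
    · rw [orthogonal_mul_monic L hp hpd horth (monic_X_pow k) (natDegree_X_pow k), h0]
  apply hdet
  refine Matrix.exists_mulVec_eq_zero_iff.1 ⟨fun i : Fin (j + 1) => p.coeff i, ?_, ?_⟩
  · intro h
    have h1 : p.coeff j = 0 := congrFun h (Fin.last j)
    rw [← hpd, coeff_natDegree, hp.leadingCoeff] at h1
    exact one_ne_zero h1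
  · ext i
    have h1 := hall i i.2
    rw [p.as_sum_range_C_mul_X_pow' (n := j + 1) (by omega), Finset.sum_mul, map_sum,
      Finset.sum_range] at h1
    simp only [Matrix.mulVec, dotProduct, Matrix.of_apply, Pi.zero_apply]
    rw [← h1]
    refine Finset.sum_congr rfl fun k _ => ?_
    rw [mul_assoc, ← pow_add, ← smul_eq_C_mul, map_smul, hL, smul_eq_mul, mul_comm,
      add_comm (k : ℕ)]

end Orthogonality

lemma integrable_eval_of_moments {μ : Measure ℝ}
    (hint : ∀ j : ℕ, Integrable (fun t : ℝ => t ^ j) μ) (f : ℝ[X]) :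
    Integrable (fun t => f.eval t) μ := by
  simp only [eval_eq_sum_range]
  exact integrable_finsetSum _ fun k _ => (hint k).const_mul _

lemma eq_integral_of_moments {μ : Measure ℝ}
    (hint : ∀ j : ℕ, Integrable (fun t : ℝ => t ^ j) μ) (L : ℝ[X] →ₗ[ℝ] ℝ)
    (hL : ∀ k, L (X ^ k) = ∫ t, t ^ k ∂μ) (f : ℝ[X]) : L f = ∫ t, f.eval t ∂μ := by
  induction f using Polynomial.induction_on' with
  | add p q hp hq =>
    simp only [map_add, eval_add, hp, hq]
    rw [integral_add (integrable_eval_of_moments hint p) (integrable_eval_of_moments hint q)]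
  | monomial n a =>
    rw [← C_mul_X_pow_eq_monomial, ← smul_eq_C_mul, map_smul, hL]
    simp [integral_const_mul]

/-- with `𝔖̃(f) = 𝔖(X·f)`, `𝔗̃_{2j} = P_j(X²)`, `𝔗̃_{2j+1} = X·P̃_j(X²)`,
every `𝔗̃_n` is monic of degree `n`, `𝔖̃(𝔗̃_m·𝔗̃_n) = 0` for `m ≠ n`, and
`𝔖̃(𝔗̃_n²) > 0` for every `n`. -/
theorem stmt_8
    (μ : Measure ℝ) [IsProbabilityMeasure μ]
    (hsupp : ∀ᵐ t ∂μ, 0 ≤ t)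
    (hint : ∀ j : ℕ, Integrable (fun t : ℝ => t ^ j) μ)
    (s : ℕ → ℝ) (hs : ∀ j, s j = ∫ t, t ^ j ∂μ)
    (hDpos : ∀ n : ℕ, 0 < (Matrix.of fun i k : Fin (n + 1) => s (i.1 + k.1)).det)
    (P : ℕ → Polynomial ℝ)
    (hPmonic : ∀ j, (P j).Monic) (hPdeg : ∀ j, (P j).natDegree = j)
    (hPorth : ∀ j k : ℕ, k < j → ∫ t, (P j).eval t * t ^ k ∂μ = 0)
    (S : Polynomial ℝ →ₗ[ℝ] ℝ)
    (hSeven : ∀ j : ℕ, S (X ^ (2 * j)) = 0)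
    (hSodd : ∀ j : ℕ, S (X ^ (2 * j + 1)) = s j)
    (hP0 : ∀ j : ℕ, 0 < (-1 : ℝ) ^ j * (P j).eval 0)
    (Pt : ℕ → Polynomial ℝ)
    (hPt : ∀ j, X * Pt j = P (j + 1) - C ((P (j + 1)).eval 0 / (P j).eval 0) * P j)
    (Tt : ℕ → Polynomial ℝ)
    (hTteven : ∀ j, Tt (2 * j) = (P j).comp (X ^ 2))
    (hTtodd : ∀ j, Tt (2 * j + 1) = X * (Pt j).comp (X ^ 2)) :
    (∀ n : ℕ, (Tt n).Monic ∧ (Tt n).natDegree = n) ∧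
    (∀ m n : ℕ, m ≠ n → S (X * (Tt m * Tt n)) = 0) ∧
    (∀ n : ℕ, 0 < S (X * (Tt n * Tt n))) := by
  -- `L f = S (X · f(X²))` is integration against `μ`
  let L : ℝ[X] →ₗ[ℝ] ℝ :=
    S ∘ₗ LinearMap.mulLeft ℝ X ∘ₗ (aeval (X ^ 2 : ℝ[X])).toLinearMap
  have hLdef : ∀ f : ℝ[X], L f = S (X * f.comp (X ^ 2)) := fun f => by
    simp [L, comp_eq_aeval]
  have hLs : ∀ k, L (X ^ k) = s k := fun k => by
    rw [hLdef, ← hSodd, X_pow_comp, ← pow_mul, pow_succ']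
  have hLint := eq_integral_of_moments hint L fun k => (hLs k).trans (hs k)
  have hSsq : ∀ f : ℝ[X], S (f.comp (X ^ 2)) = 0 := fun f => by
    induction f using Polynomial.induction_on' with
    | add p q hp hq => rw [add_comp, map_add, hp, hq, add_zero]
    | monomial n a =>
      rw [monomial_comp, ← pow_mul, ← smul_eq_C_mul, map_smul, hSeven, smul_zero]
  have horth : ∀ j, ∀ k < j, L (P j * X ^ k) = 0 := fun j k hk => by
    rw [hLint]; simpa using hPorth j k hk
  have hdegP : ∀ j, (P j).degree = j := fun j => by
    rw [degree_eq_natDegree (hPmonic j).ne_zero, hPdeg]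
  have hpos : ∀ j, 0 < L (P j * P j) := fun j => by
    refine lt_of_le_of_ne ?_
      (orthogonal_norm_ne_zero L hLs (hDpos j).ne' (hPmonic j) (hPdeg j) (horth j)).symm
    rw [hLint]
    exact integral_nonneg fun t => by simpa using mul_self_nonneg _
  have hPPzero : ∀ i j, i < j → L (P j * P i) = 0 := fun i j hij =>
    orthogonal_of_degree_lt L (horth j) (by rw [hdegP]; exact_mod_cast hij)
  have hc : ∀ j, (P (j + 1)).eval 0 / (P j).eval 0 < 0 := fun j => by
    have h1 := hP0 j
    have h2 := hP0 (j + 1)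
    rw [pow_succ] at h2
    rcases neg_one_pow_eq_or ℝ j with h | h <;> rw [h] at h1 h2
    · exact div_neg_of_neg_of_pos (by linarith) (by linarith)
    · exact div_neg_of_pos_of_neg (by linarith) (by linarith)
  have hlow : ∀ j, (C ((P (j + 1)).eval 0 / (P j).eval 0) * P j).degree < (P (j + 1)).degree :=
    fun j => by
      rw [degree_C_mul (hc j).ne, hdegP, hdegP]
      exact_mod_cast j.lt_succ_self
  have hXPt : ∀ j, (X * Pt j).Monic := fun j => by
    rw [hPt]; exact (hPmonic (j + 1)).sub_of_left (hlow j)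
  have hPtm : ∀ j, (Pt j).Monic := fun j => monic_X.of_mul_monic_left (hXPt j)
  have hPtd : ∀ j, (Pt j).natDegree = j := fun j => by
    have h1 : (X * Pt j).natDegree = j + 1 := by
      rw [hPt]
      refine natDegree_eq_of_degree_eq_some ?_
      rw [degree_sub_eq_left_of_degree_lt (hlow j), hdegP]
    rw [natDegree_X_mul (hPtm j).ne_zero] at h1
    omega
  have hdegPt : ∀ j, (Pt j).degree = j := fun j => by
    rw [degree_eq_natDegree (hPtm j).ne_zero, hPtd]
  have hoo : ∀ (q : ℝ[X]) (j : ℕ), q.degree < (j + 1 : ℕ) → L (X * Pt j * q)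
      = -((P (j + 1)).eval 0 / (P j).eval 0) * L (P j * q) := fun q j hq => by
    rw [hPt, sub_mul, map_sub, orthogonal_of_degree_lt L (horth (j + 1)) hq, mul_assoc,
      ← smul_eq_C_mul, map_smul, smul_eq_mul]
    ring
  have hoozero : ∀ i j, i < j → L (X * Pt j * Pt i) = 0 := fun i j hij => by
    have hdeg : (Pt i).degree < j := by rw [hdegPt]; exact_mod_cast hij
    rw [hoo _ _ (hdeg.trans (by exact_mod_cast j.lt_succ_self)),
      orthogonal_of_degree_lt L (horth j) hdeg, mul_zero]
  have hoopos : ∀ j, 0 < L (X * Pt j * Pt j) := fun j => by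
    rw [hoo _ _ (by rw [hdegPt]; exact_mod_cast j.lt_succ_self),
      orthogonal_mul_monic L (hPmonic j) (hPdeg j) (horth j) (hPtm j) (hPtd j)]
    exact mul_pos (neg_pos.2 (hc j)) (hpos j)
  have hSee : ∀ i j, S (X * (Tt (2 * i) * Tt (2 * j))) = L (P i * P j) := fun i j => by
    rw [hLdef, hTteven, hTteven, mul_comp]
  have hSoo : ∀ i j, S (X * (Tt (2 * i + 1) * Tt (2 * j + 1))) = L (X * Pt i * Pt j) :=
    fun i j => by
      rw [hLdef, hTtodd, hTtodd, mul_comp, mul_comp, X_comp]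
      congr 1; ring
  have hSeo : ∀ i j, S (X * (Tt (2 * i) * Tt (2 * j + 1))) = 0 := fun i j => by
    rw [← hSsq (X * (P i * Pt j)), hTteven, hTtodd, mul_comp, mul_comp, X_comp]
    congr 1; ring
  have hX2 : (X ^ 2 : ℝ[X]).natDegree = 2 := natDegree_X_pow 2
  refine ⟨fun n => ?_, ?_, fun n => ?_⟩
  · rcases Nat.even_or_odd' n with ⟨j, rfl | rfl⟩
    · rw [hTteven]
      refine ⟨(hPmonic j).comp (monic_X_pow 2) (by simp), ?_⟩
      rw [natDegree_comp, hX2, hPdeg, mul_comm]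
    · rw [hTtodd]
      have hm : ((Pt j).comp (X ^ 2)).Monic := (hPtm j).comp (monic_X_pow 2) (by simp)
      refine ⟨monic_X.mul hm, ?_⟩
      rw [natDegree_X_mul hm.ne_zero, natDegree_comp, hX2, hPtd, mul_comm]
  · have hlt : ∀ m n : ℕ, m < n → S (X * (Tt n * Tt m)) = 0 := by
      intro m n hmn
      rcases Nat.even_or_odd' m with ⟨i, rfl | rfl⟩ <;>
        rcases Nat.even_or_odd' n with ⟨j, rfl | rfl⟩
      · rw [hSee]; exact hPPzero i j (by omega)
      · rw [mul_comm (Tt _)]; exact hSeo i j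
      · exact hSeo j i
      · rw [hSoo]; exact hoozero i j (by omega)
    intro m n hmn
    rcases lt_or_gt_of_ne hmn with h | h
    · rw [mul_comm (Tt m)]; exact hlt m n h
    · exact hlt n m h
  · rcases Nat.even_or_odd' n with ⟨j, rfl | rfl⟩
    · rw [hSee]; exact hpos j
    · rw [hSoo]; exact hoopos j
end

section
/- For every z ∈ ℂ with Im z > 0 one has Im(z·∫ (t − z²)^{−1} dμ(t)) > 0; that is, the unwrapping λ ↦ λ·S(λ²) of the Stieltjes function S(λ) = ∫ (t − λ)^{−1} dμ(t) maps the open upper half-plane into itself, i.e. it is a Nevanlinna function. -/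
/-!
For `t ≥ 0` and `z = x + iy` with `y > 0`,
`Im (z / (t - z²)) = y (t + |z|²) / |t - z²|² > 0`, and `|t - z²| ≥ y²`
(as `t - z² = (√t - z)(√t + z)` and both factors have imaginary part `∓y`). The second fact makes
`(t - z²)⁻¹` bounded, hence integrable for the probability measure `μ`, so the imaginary part may
be taken under the integral; the integral of an a.e. positive function is then positive.
-/

open Polynomial MeasureTheory

lemma im_pow_four_le_normSq {z : ℂ} {t : ℝ} (ht : 0 ≤ t) :
    z.im ^ 4 ≤ Complex.normSq ((t : ℂ) - z ^ 2) := by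
  have h : Complex.normSq ((t : ℂ) - z ^ 2)
      = z.im ^ 4 + ((t - z.re ^ 2) ^ 2 + 2 * z.im ^ 2 * t + 2 * z.re ^ 2 * z.im ^ 2) := by
    simp [Complex.normSq_apply, pow_two]
    ring
  rw [h]
  have : 0 ≤ (t - z.re ^ 2) ^ 2 + 2 * z.im ^ 2 * t + 2 * z.re ^ 2 * z.im ^ 2 := by positivity
  linarith

lemma im_mul_inv_pos {z : ℂ} (hz : 0 < z.im) {t : ℝ} (ht : 0 ≤ t) :
    0 < (z * ((t : ℂ) - z ^ 2)⁻¹).im := by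
  have hN : 0 < Complex.normSq ((t : ℂ) - z ^ 2) :=
    lt_of_lt_of_le (by positivity) (im_pow_four_le_normSq ht)
  have h : (z * ((t : ℂ) - z ^ 2)⁻¹).im
      = z.im * (t + z.re ^ 2 + z.im ^ 2) / Complex.normSq ((t : ℂ) - z ^ 2) := by
    rw [Complex.mul_im, Complex.inv_re, Complex.inv_im]
    field_simp
    simp [pow_two]
    ring
  rw [h]
  positivity

lemma integrable_inv_sub_sq (μ : Measure ℝ) [IsProbabilityMeasure μ]
    (hsupp : ∀ᵐ t ∂μ, 0 ≤ t) {z : ℂ} (hz : 0 < z.im) :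
    Integrable (fun t : ℝ => ((t : ℂ) - z ^ 2)⁻¹) μ := by
  refine Integrable.of_bound (C := (z.im ^ 2)⁻¹) ?_ ?_
  · exact Measurable.aestronglyMeasurable (by fun_prop)
  · filter_upwards [hsupp] with t ht
    rw [norm_inv]
    refine inv_anti₀ (by positivity) ?_
    refine abs_le_of_sq_le_sq' ?_ (norm_nonneg _) |>.2
    rw [← Complex.normSq_eq_norm_sq, ← pow_mul]
    exact im_pow_four_le_normSq ht

/-- for every `z` in the open upper half-plane,
`Im (z·∫ (t - z²)⁻¹ dμ(t)) > 0`; the unwrapping `λ ↦ λ·S(λ²)` of the Stieltjes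
transform of `μ` is a Nevanlinna function. -/
theorem stmt_11
    (μ : Measure ℝ) [IsProbabilityMeasure μ]
    (hsupp : ∀ᵐ t ∂μ, 0 ≤ t)
    (hint : ∀ j : ℕ, Integrable (fun t : ℝ => t ^ j) μ) :
    ∀ z : ℂ, 0 < z.im →
      0 < (z * ∫ t, ((t : ℂ) - z ^ 2)⁻¹ ∂μ).im := by
  intro z hz
  have hI := (integrable_inv_sub_sq μ hsupp hz).const_mul z
  have hpos : ∀ᵐ t : ℝ ∂μ, 0 < (z * ((t : ℂ) - z ^ 2)⁻¹).im := by
    filter_upwards [hsupp] with t ht using im_mul_inv_pos hz ht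
  have him : (z * ∫ t, ((t : ℂ) - z ^ 2)⁻¹ ∂μ).im
      = ∫ t : ℝ, (z * ((t : ℂ) - z ^ 2)⁻¹).im ∂μ := by
    rw [← integral_const_mul]
    exact (integral_im hI).symm
  rw [him, integral_pos_iff_support_of_nonneg_ae (hpos.mono fun t ht => ht.le) hI.im]
  -- The integrand is nonzero almost everywhere, so its support has full measure.
  have hsup : ∀ᵐ t : ℝ ∂μ,
      t ∈ Function.support fun t : ℝ => (z * ((t : ℂ) - z ^ 2)⁻¹).im :=
    hpos.mono fun t ht => ht.ne'
  rw [measure_eq_measure_of_null_sdiff (Set.subset_univ _) (by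
    rw [← Set.compl_eq_univ_sdiff]; exact hsup), measure_univ]
  exact one_pos
end

section
/- Let a > 0 and 0 < α < √a. Then (−1)^j·P_j(α²) > 0 for every j ≥ 0; moreover, defining u_j^{(α)} = −P_{j+1}(α²)/P_j(α²), l_0^{(α)} = 0 and l_{j+1}^{(α)} = c_j/u_j^{(α)}, one has for all n ≥ 0: u_n^{(α)} > 0, l_{n+1}^{(α)} > 0, b_n − α² = u_n^{(α)} + l_n^{(α)}, and c_n = l_{n+1}^{(α)}·u_n^{(α)}. (These identities express the shifted LU factorization J − α²·I = LU of the monic Jacobi matrix J.) -/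
open Polynomial MeasureTheory

/-!
Write `x = α² < a`, let `L p = ∫ p dμ` be the moment functional and `h n = L (P n ^ 2)`. The recurrence
gives `h (n + 1) = c n * h n`, so `h n > 0`. Consider the unnormalised Christoffel–Darboux kernel,
the polynomial `Q` of degree at most `n` with

  `(X - x) * Q = P_n(x) * P_{n+1} - P_{n+1}(x) * P_n`,  `Q = P_n(x) * P_n + R`,  `deg R < n`.

Orthogonality gives `L ((X - x) * Q²) = -P_n(x) * P_{n+1}(x) * h n` and
`L (Q²) = P_n(x)² * h n + L (R²)`. Since `t - x ≥ a - x` on the support of `μ`,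
`(a - x) * P_n(x)² ≤ -P_n(x) * P_{n+1}(x)` follows after division by `h n`
(`eval_mul_eval_succ_le`). Hence consecutive values `P_n(x)` have strictly opposite signs, which is the
sign statement and the positivity of `u`; the two identities are the recurrence evaluated at `x`.
-/

lemma integrable_eval {μ : Measure ℝ} (hint : ∀ j : ℕ, Integrable (fun t : ℝ => t ^ j) μ)
    (p : ℝ[X]) : Integrable (fun t => p.eval t) μ := by
  simp only [eval_eq_sum_range]
  exact integrable_finsetSum _ fun i _ => (hint i).const_mul _

/-- The moment functional `p ↦ ∫ p dμ` on polynomials, for a measure with finite moments. -/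
noncomputable def momentFunctional (μ : Measure ℝ)
    (hint : ∀ j : ℕ, Integrable (fun t : ℝ => t ^ j) μ) : ℝ[X] →ₗ[ℝ] ℝ where
  toFun p := ∫ t, p.eval t ∂μ
  map_add' p q := by
    simp only [eval_add]
    exact integral_add (integrable_eval hint p) (integrable_eval hint q)
  map_smul' r p := by
    simp only [eval_smul, smul_eq_mul, RingHom.id_apply]
    exact integral_const_mul _ _

lemma functional_C_mul (L : ℝ[X] →ₗ[ℝ] ℝ) (r : ℝ) (p : ℝ[X]) : L (C r * p) = r * L p := by
  rw [← smul_eq_C_mul, map_smul, smul_eq_mul]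

/-- Orthogonality to the powers `X ^ k`, `k < n`, extends to all polynomials of degree `< n`. -/
lemma functional_mul_eq_zero (L : ℝ[X] →ₗ[ℝ] ℝ) (p : ℝ[X]) (n : ℕ)
    (h : ∀ k < n, L (p * X ^ k) = 0) (q : ℝ[X]) (hq : q.degree < n) : L (p * q) = 0 := by
  rcases eq_or_ne q 0 with rfl | hq0
  · simp
  rw [q.as_sum_range' n ((natDegree_lt_iff_degree_lt hq0).2 hq), Finset.mul_sum, map_sum]
  refine Finset.sum_eq_zero fun k hk => ?_
  rw [← C_mul_X_pow_eq_monomial, mul_left_comm, functional_C_mul, h k (Finset.mem_range.1 hk),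
    mul_zero]

section Recurrence

variable {P : ℕ → ℝ[X]} {b c : ℕ → ℝ}

/-- The Christoffel–Darboux identity: `C (P_n(x)) * P n + R` is the kernel polynomial. It follows by
induction from the recurrence, the kernel of index `n + 1` being
`P_{n+1}(x) * P_{n+1} + c_n * (kernel of index n)`. -/
lemma exists_kernel (hPmonic : ∀ j, (P j).Monic) (hPdeg : ∀ j, (P j).natDegree = j)
    (hrec0 : X * P 0 = P 1 + C (b 0) * P 0)
    (hrec : ∀ j : ℕ, X * P (j + 1) = P (j + 2) + C (b (j + 1)) * P (j + 1) + C (c j) * P j)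
    (x : ℝ) (n : ℕ) : ∃ R : ℝ[X], R.degree < n ∧
      (X - C x) * (C ((P n).eval x) * P n + R)
        = C ((P n).eval x) * P (n + 1) - C ((P (n + 1)).eval x) * P n := by
  induction n with
  | zero =>
    refine ⟨0, by simp, ?_⟩
    have h0 : P 0 = 1 := eq_one_of_monic_natDegree_zero (hPmonic 0) (hPdeg 0)
    have h1 : P 1 = X - C (b 0) := by
      rw [h0] at hrec0
      linear_combination -hrec0
    simp [h0, h1]
  | succ n ih =>
    obtain ⟨R, hR, h⟩ := ih
    refine ⟨C (c n) * (C ((P n).eval x) * P n + R), ?_, ?_⟩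
    · have hP : (P n).degree ≤ n := by
        simpa [hPdeg n] using (P n).degree_le_natDegree
      have hC : ∀ (r : ℝ) (p : ℝ[X]), p.degree ≤ n → (C r * p).degree ≤ n := fun r p hp => by
        rw [← smul_eq_C_mul]
        exact (degree_smul_le r p).trans hp
      refine lt_of_le_of_lt (hC _ _ ?_) (by exact_mod_cast Nat.lt_succ_self n)
      exact (degree_add_le _ _).trans (max_le (hC _ _ hP) hR.le)
    · have hx := congrArg (fun p => C (p.eval x)) (hrec n)
      simp only [eval_add, eval_mul, eval_X, eval_C, C_add, C_mul] at hx
      linear_combination C (c n) * h - P (n + 1) * hx + C ((P (n + 1)).eval x) * hrec n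

variable {L : ℝ[X] →ₗ[ℝ] ℝ}

lemma functional_sq_pos (hL1 : 0 < L 1) (hPmonic : ∀ j, (P j).Monic)
    (hPdeg : ∀ j, (P j).natDegree = j)
    (hLorth : ∀ (j : ℕ) (q : ℝ[X]), q.degree < j → L (P j * q) = 0) (hc : ∀ j, 0 < c j)
    (hrec : ∀ j : ℕ, X * P (j + 1) = P (j + 2) + C (b (j + 1)) * P (j + 1) + C (c j) * P j)
    (n : ℕ) : 0 < L (P n * P n) := by
  induction n with
  | zero =>
    rw [eq_one_of_monic_natDegree_zero (hPmonic 0) (hPdeg 0), mul_one]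
    exact hL1
  | succ n ih =>
    have hdeg : ∀ j, (P j).degree = j := fun j => by
      rw [degree_eq_natDegree (hPmonic j).ne_zero, hPdeg]
    -- `P (n + 1)` may be replaced by `X * P n` in one factor: both are monic of degree `n + 1`.
    have h1 : L (P (n + 1) * (P (n + 1) - X * P n)) = 0 := by
      refine hLorth _ _ ?_
      rw [← hdeg (n + 1)]
      refine degree_sub_lt_left ?_ (hPmonic _).ne_zero ?_
      · rw [degree_mul, degree_X, hdeg, hdeg]
        push_cast
        ring
      · rw [(hPmonic _).leadingCoeff, (monic_X.mul (hPmonic n)).leadingCoeff]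
    have h2 : L (P (n + 2) * P n) = 0 := by
      refine hLorth _ _ ?_
      rw [hdeg]
      exact_mod_cast (by omega : n < n + 2)
    have h3 : L (P (n + 1) * P n) = 0 := by
      refine hLorth _ _ ?_
      rw [hdeg]
      exact_mod_cast Nat.lt_succ_self n
    have h4 : P (n + 1) * P (n + 1) = P (n + 1) * (P (n + 1) - X * P n) + P (n + 2) * P n
        + C (b (n + 1)) * (P (n + 1) * P n) + C (c n) * (P n * P n) := by
      linear_combination P n * hrec n
    rw [h4, map_add, map_add, map_add, functional_C_mul, functional_C_mul, h1, h2, h3]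
    simpa using mul_pos (hc n) ih

/-- Comparison of `L ((X - x) Q²)` with `d * L (Q²)` for the kernel polynomial `Q` of index `n`; as
`d > 0`, it forces `P_n(x)` and `P_{n+1}(x)` to have opposite signs once `P_n(x) ≠ 0`. -/
lemma eval_mul_eval_succ_le (hL1 : 0 < L 1) (hLsq : ∀ q, 0 ≤ L (q * q)) {x d : ℝ} (hd : 0 < d)
    (hLx : ∀ q, d * L (q * q) ≤ L ((X - C x) * (q * q)))
    (hPmonic : ∀ j, (P j).Monic) (hPdeg : ∀ j, (P j).natDegree = j)
    (hLorth : ∀ (j : ℕ) (q : ℝ[X]), q.degree < j → L (P j * q) = 0) (hc : ∀ j, 0 < c j)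
    (hrec0 : X * P 0 = P 1 + C (b 0) * P 0)
    (hrec : ∀ j : ℕ, X * P (j + 1) = P (j + 2) + C (b (j + 1)) * P (j + 1) + C (c j) * P j)
    (n : ℕ) : d * (P n).eval x ^ 2 ≤ -((P n).eval x * (P (n + 1)).eval x) := by
  obtain ⟨R, hR, hQ⟩ := exists_kernel hPmonic hPdeg hrec0 hrec x n
  have hh := functional_sq_pos hL1 hPmonic hPdeg hLorth hc hrec n
  have hnn : (n : WithBot ℕ) < ((n + 1 : ℕ) : WithBot ℕ) := by exact_mod_cast Nat.lt_succ_self n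
  have hPR : L (P n * R) = 0 := hLorth n R hR
  have hP'R : L (P (n + 1) * R) = 0 := hLorth _ R (hR.trans hnn)
  have hP'P : L (P (n + 1) * P n) = 0 := by
    refine hLorth _ _ (lt_of_le_of_lt ?_ hnn)
    simpa [hPdeg n] using (P n).degree_le_natDegree
  have key := hLx (C ((P n).eval x) * P n + R)
  rw [← mul_assoc, hQ] at key
  generalize (P n).eval x = p at *
  generalize (P (n + 1)).eval x = p' at *
  have e1 : (C p * P n + R) * (C p * P n + R)
      = C (p ^ 2) * (P n * P n) + C (2 * p) * (P n * R) + R * R := by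
    simp only [C_mul, C_pow, C_ofNat]
    ring
  have e2 : (C p * P (n + 1) - C p' * P n) * (C p * P n + R)
      = C (p ^ 2) * (P (n + 1) * P n) + C p * (P (n + 1) * R)
        + C (-(p * p')) * (P n * P n) + C (-p') * (P n * R) := by
    simp only [C_mul, C_pow, C_neg]
    ring
  rw [e1, e2] at key
  simp only [map_add, functional_C_mul, hPR, hP'R, hP'P, mul_zero, zero_add, add_zero] at key
  have hRR := mul_nonneg hd.le (hLsq R)
  exact le_of_mul_le_mul_right (by linarith) hh

end Recurrence

/-- for `0 < α < √a` one has `(-1)^j·P_j(α²) > 0`, and with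
`u_j = -P_{j+1}(α²)/P_j(α²)`, `l_0 = 0`, `l_{j+1} = c_j/u_j`:
`u_n > 0`, `l_{n+1} > 0`, `b_n - α² = u_n + l_n`, `c_n = l_{n+1}·u_n`
(the shifted LU factorization `J - α²·I = LU`). -/
theorem stmt_12
    (a : ℝ) (ha : 0 < a)
    (μ : Measure ℝ) [IsProbabilityMeasure μ]
    (hsupp : ∀ᵐ t ∂μ, a ≤ t)
    (hint : ∀ j : ℕ, Integrable (fun t : ℝ => t ^ j) μ)
    (s : ℕ → ℝ) (hs : ∀ j, s j = ∫ t, t ^ j ∂μ)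
    (hDpos : ∀ n : ℕ, 0 < (Matrix.of fun i k : Fin (n + 1) => s (i.1 + k.1)).det)
    (P : ℕ → Polynomial ℝ)
    (hPmonic : ∀ j, (P j).Monic) (hPdeg : ∀ j, (P j).natDegree = j)
    (hPorth : ∀ j k : ℕ, k < j → ∫ t, (P j).eval t * t ^ k ∂μ = 0)
    (b c : ℕ → ℝ) (hc : ∀ j, 0 < c j)
    (hrec0 : X * P 0 = P 1 + C (b 0) * P 0)
    (hrec : ∀ j : ℕ, X * P (j + 1) = P (j + 2) + C (b (j + 1)) * P (j + 1) + C (c j) * P j)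
    (α : ℝ) (hα0 : 0 < α) (hαa : α < Real.sqrt a)
    (u : ℕ → ℝ) (hu : ∀ j, u j = -((P (j + 1)).eval (α ^ 2)) / (P j).eval (α ^ 2))
    (l : ℕ → ℝ) (hl0 : l 0 = 0) (hl : ∀ j, l (j + 1) = c j / u j) :
    (∀ j : ℕ, 0 < (-1 : ℝ) ^ j * (P j).eval (α ^ 2)) ∧
    (∀ n : ℕ, 0 < u n ∧ 0 < l (n + 1) ∧ b n - α ^ 2 = u n + l n ∧ c n = l (n + 1) * u n) := by
  have hx : α ^ 2 < a := (Real.lt_sqrt hα0.le).1 hαa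
  let L := momentFunctional μ hint
  have hL : ∀ p, L p = ∫ t, p.eval t ∂μ := fun _ => rfl
  have hLorth : ∀ (j : ℕ) (q : ℝ[X]), q.degree < j → L (P j * q) = 0 := fun j q hq =>
    functional_mul_eq_zero L _ j (fun k hk => by simpa [hL] using hPorth j k hk) q hq
  have hLsq : ∀ q, 0 ≤ L (q * q) := fun q => by
    rw [hL]
    refine integral_nonneg fun t => ?_
    simpa using mul_self_nonneg (q.eval t)
  have hLx : ∀ q, (a - α ^ 2) * L (q * q) ≤ L ((X - C (α ^ 2)) * (q * q)) := fun q => by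
    rw [← functional_C_mul, hL, hL]
    refine integral_mono_ae (integrable_eval hint _) (integrable_eval hint _) ?_
    filter_upwards [hsupp] with t ht
    simp only [eval_mul, eval_sub, eval_X, eval_C]
    exact mul_le_mul_of_nonneg_right (by linarith) (mul_self_nonneg _)
  have hL1 : 0 < L 1 := by simp [hL]
  have step := eval_mul_eval_succ_le hL1 hLsq (sub_pos.2 hx) hLx hPmonic hPdeg hLorth hc hrec0 hrec
  have h0 : P 0 = 1 := eq_one_of_monic_natDegree_zero (hPmonic 0) (hPdeg 0)
  have hne : ∀ n, (P n).eval (α ^ 2) ≠ 0 → (P n).eval (α ^ 2) * (P (n + 1)).eval (α ^ 2) < 0 :=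
    fun n hn => by
      have := mul_pos (sub_pos.2 hx) (pow_pos (abs_pos.2 hn) 2)
      rw [sq_abs] at this
      linarith [step n]
  have hsign : ∀ j : ℕ, 0 < (-1 : ℝ) ^ j * (P j).eval (α ^ 2) := by
    intro j
    induction j with
    | zero => simp [h0]
    | succ n ih =>
      have h := hne n (right_ne_zero_of_mul ih.ne')
      refine pos_of_mul_pos_right (a := (-1 : ℝ) ^ n * (P n).eval (α ^ 2)) ?_ ih.le
      have e : ((-1 : ℝ) ^ n) * (-1) ^ n = 1 := by rw [← mul_pow]; simp
      have e' : (-1 : ℝ) ^ n * (P n).eval (α ^ 2) * ((-1) ^ (n + 1) * (P (n + 1)).eval (α ^ 2))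
          = -((P n).eval (α ^ 2) * (P (n + 1)).eval (α ^ 2)) := by
        rw [pow_succ (-1 : ℝ) n]
        generalize (-1 : ℝ) ^ n = r at e ⊢
        generalize (P n).eval (α ^ 2) = p
        generalize (P (n + 1)).eval (α ^ 2) = p'
        linear_combination -(p * p') * e
      rw [e']
      linarith
  have hP : ∀ n, (P n).eval (α ^ 2) ≠ 0 := fun n => right_ne_zero_of_mul (hsign n).ne'
  have hupos : ∀ n, 0 < u n := fun n => by
    have h := hne n (hP n)
    have e : u n = -((P n).eval (α ^ 2) * (P (n + 1)).eval (α ^ 2)) / (P n).eval (α ^ 2) ^ 2 := by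
      rw [hu]
      field_simp [hP n]
    rw [e]
    exact div_pos (by linarith) (pow_pos (abs_pos.2 (hP n)) 2 |>.trans_eq (sq_abs _))
  refine ⟨hsign, fun n => ⟨hupos n, ?_, ?_, ?_⟩⟩
  · rw [hl]
    exact div_pos (hc n) (hupos n)
  · cases n with
    | zero =>
      have h := congrArg (eval (α ^ 2)) hrec0
      simp only [h0, eval_add, eval_mul, eval_X, eval_C, eval_one] at h
      rw [hl0, hu, h0, eval_one]
      linear_combination -h
    | succ n =>
      have h := congrArg (eval (α ^ 2)) (hrec n)
      simp only [eval_add, eval_mul, eval_X, eval_C] at h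
      have h1 := hP n
      have h2 := hP (n + 1)
      rw [hl, hu, hu]
      field_simp
      linear_combination -h
  · rw [hl, div_mul_cancel₀ _ (hupos n).ne']
end

section
/- Let α ∈ ℝ with α² < a. Then for every j ≥ 1 the determinant det((s_{1+l+k} − α²·s_{l+k})_{l,k=0}^{j−1}) is positive, and P_j(α²) = ((−1)^j / D_{j−1}) · det((s_{1+l+k} − α²·s_{l+k})_{l,k=0}^{j−1}), where D_{−1} = 1. -/
open Polynomial MeasureTheory

/-!
Write `b = α²`, `H` for the Hankel matrix of `s` and `K` for the matrix with entries
`s (1 + l + k) - b * s (l + k)`.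

*Positivity.* A matrix with entries `∫ t ^ (l + k) * w t ∂μ` and weight `w ≥ 0` is positive
semidefinite (`posSemidef_moments`). Hence `H`, whose determinant is nonzero, is positive definite,
and `K = (a - b) • H + M`, where `M` is the moment matrix of the weight `t - a`, is positive
definite too.

*Formula.* Let `C` be the companion matrix of `P_j`, i.e. the matrix of multiplication by `X` on
`ℝ[X] ⧸ (P_j)`. Since `P_j` is orthogonal to all lower powers, the moment functional does not see
the reduction of `t ^ j` modulo `P_j`, which gives `K = H * (C - b)`. As `P_j` is the characteristic
polynomial of `C`, taking determinants gives `det K = (-1) ^ j * P_j(b) * det H`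
(`det_shifted_hankel`).
-/

/-- The moment matrix of a nonnegative weight is positive semidefinite: its quadratic form at `x`
is the integral of the weight against the square of the polynomial with coefficients `x`. -/
lemma posSemidef_moments (μ : Measure ℝ) (w : ℝ → ℝ) (hw : ∀ᵐ t ∂μ, 0 ≤ w t)
    (hint : ∀ j : ℕ, Integrable (fun t : ℝ => t ^ j * w t) μ) (n : ℕ) :
    (Matrix.of fun l k : Fin n => ∫ t, t ^ (l.1 + k.1) * w t ∂μ).PosSemidef := by
  refine Matrix.PosSemidef.of_dotProduct_mulVec_nonneg ?_ fun x => ?_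
  · ext i j
    simp [add_comm]
  · have key : star x ⬝ᵥ ((Matrix.of fun l k : Fin n => ∫ t, t ^ (l.1 + k.1) * w t ∂μ).mulVec x)
        = ∫ t, (∑ l : Fin n, x l * t ^ l.1) ^ 2 * w t ∂μ := by
      have hexp : ∀ t : ℝ, (∑ l : Fin n, x l * t ^ l.1) ^ 2 * w t
          = ∑ l : Fin n, ∑ k : Fin n, (x l * x k) * (t ^ (l.1 + k.1) * w t) := by
        intro t
        rw [sq, Finset.sum_mul_sum, Finset.sum_mul]
        refine Finset.sum_congr rfl fun l _ => ?_
        rw [Finset.sum_mul]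
        refine Finset.sum_congr rfl fun k _ => ?_
        ring
      simp_rw [hexp]
      rw [integral_finsetSum _ fun l _ => integrable_finsetSum _ fun k _ =>
        (hint (l.1 + k.1)).const_mul _]
      simp only [dotProduct, Matrix.mulVec, Matrix.of_apply, star_trivial]
      refine Finset.sum_congr rfl fun l _ => ?_
      rw [integral_finsetSum _ fun k _ => (hint (l.1 + k.1)).const_mul _, Finset.mul_sum]
      refine Finset.sum_congr rfl fun k _ => ?_
      rw [integral_const_mul]
      ring
    rw [key]
    refine integral_nonneg_of_ae ?_
    filter_upwards [hw] with t ht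
    exact mul_nonneg (sq_nonneg _) ht

/-- If the functional `X ^ j ↦ s j` annihilates `p * X ^ k` for all `k < natDegree p`, then the
shifted Hankel matrix factors through the companion matrix of `p`, realised as the matrix of
multiplication by the root in `AdjoinRoot p`, whose characteristic polynomial is `p`. -/
lemma det_shifted_hankel (p : ℝ[X]) (hp : p.Monic) (s : ℕ → ℝ) (b : ℝ)
    (horth : ∀ k < p.natDegree, ∑ i ∈ Finset.range (p.natDegree + 1), p.coeff i * s (i + k) = 0) :
    (Matrix.of fun l k : Fin p.natDegree => s (1 + l.1 + k.1) - b * s (l.1 + k.1)).det =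
      (-1) ^ p.natDegree * p.eval b *
        (Matrix.of fun l k : Fin p.natDegree => s (l.1 + k.1)).det := by
  obtain ⟨C, hC, hchar⟩ : ∃ C : Matrix (Fin p.natDegree) (Fin p.natDegree) ℝ,
      (C = Matrix.of fun i j : Fin p.natDegree => if j.1 + 1 = p.natDegree then -p.coeff i.1
        else if i.1 = j.1 + 1 then 1 else 0) ∧ C.charpoly = p := by
    have hmin : minpoly ℝ (AdjoinRoot.powerBasis' hp).gen = p := by
      change minpoly ℝ (AdjoinRoot.root p) = p
      rw [AdjoinRoot.minpoly_root hp.ne_zero, hp.leadingCoeff]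
      simp
    refine ⟨Algebra.leftMulMatrix (AdjoinRoot.powerBasis' hp).basis
      (AdjoinRoot.powerBasis' hp).gen, ?_, ?_⟩
    · have h := (AdjoinRoot.powerBasis' hp).leftMulMatrix
      rw [PowerBasis.minpolyGen_eq, hmin] at h
      exact h
    · have h := charpoly_leftMulMatrix (AdjoinRoot.powerBasis' hp)
      rw [hmin] at h
      exact h
  have hfac : (Matrix.of fun l k : Fin p.natDegree => s (1 + l.1 + k.1) - b * s (l.1 + k.1)) =
      (Matrix.of fun l k : Fin p.natDegree => s (l.1 + k.1)) *
        -(Matrix.scalar (Fin p.natDegree) b - C) := by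
    rw [neg_sub, mul_sub]
    ext l k
    have h2 : ((Matrix.of fun l k : Fin p.natDegree => s (l.1 + k.1)) *
        Matrix.scalar (Fin p.natDegree) b) l k = b * s (l.1 + k.1) := by
      simp [Matrix.scalar_apply, Matrix.mul_diagonal, mul_comm]
    rw [Matrix.sub_apply, h2, Matrix.of_apply, sub_left_inj, Matrix.mul_apply, hC]
    simp only [Matrix.of_apply]
    by_cases hk : k.1 + 1 = p.natDegree
    · -- In the last column the entry of `H * C` is the reduction of `X ^ natDegree p` modulo `p`.
      have h := horth l.1 l.2
      rw [Finset.sum_range_succ, hp.coeff_natDegree, one_mul, Finset.sum_range] at h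
      simp only [hk, if_true]
      have h3 : 1 + l.1 + k.1 = p.natDegree + l.1 := by omega
      rw [h3, eq_neg_of_add_eq_zero_right h, ← Finset.sum_neg_distrib]
      refine Finset.sum_congr rfl fun i _ => ?_
      rw [add_comm l.1 i.1]
      ring
    · have hk' : k.1 + 1 < p.natDegree := by have := k.2; omega
      simp only [hk, if_false]
      rw [Finset.sum_eq_single (⟨k.1 + 1, hk'⟩ : Fin p.natDegree)]
      · simp only [if_true, mul_one]
        congr 1
        omega
      · intro i _ hi
        rw [if_neg fun h => hi (Fin.ext h), mul_zero]
      · simp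
  rw [hfac, Matrix.det_mul, Matrix.det_neg, ← Matrix.eval_charpoly, hchar, Fintype.card_fin]
  ring

/-- for `α² < a` and every `j ≥ 1` (here `j = m + 1`), the
determinant `det((s_{1+l+k} - α²·s_{l+k})_{l,k=0}^{j-1})` is positive and
`P_j(α²) = ((-1)^j / D_{j-1})·det(...)`, where `D (m+1)` denotes the Hankel
determinant `D_m = det((s_{i+k})_{i,k=0}^{m})` and `D 0 = 1` plays the role of
`D_{-1}`. -/
theorem stmt_13
    (a : ℝ) (ha : 0 < a)
    (μ : Measure ℝ) [IsProbabilityMeasure μ]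
    (hsupp : ∀ᵐ t ∂μ, a ≤ t)
    (hint : ∀ j : ℕ, Integrable (fun t : ℝ => t ^ j) μ)
    (s : ℕ → ℝ) (hs : ∀ j, s j = ∫ t, t ^ j ∂μ)
    (D : ℕ → ℝ) (hD0 : D 0 = 1)
    (hD : ∀ n : ℕ, D (n + 1) = (Matrix.of fun i k : Fin (n + 1) => s (i.1 + k.1)).det)
    (hDpos : ∀ n, 0 < D n)
    (P : ℕ → Polynomial ℝ)
    (hPmonic : ∀ j, (P j).Monic) (hPdeg : ∀ j, (P j).natDegree = j)
    (hPorth : ∀ j k : ℕ, k < j → ∫ t, (P j).eval t * t ^ k ∂μ = 0)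
    (α : ℝ) (hα : α ^ 2 < a) :
    ∀ m : ℕ,
      0 < (Matrix.of fun l k : Fin (m + 1) =>
          s (1 + l.1 + k.1) - α ^ 2 * s (l.1 + k.1)).det ∧
      (P (m + 1)).eval (α ^ 2) =
        ((-1 : ℝ) ^ (m + 1) / D (m + 1)) *
          (Matrix.of fun l k : Fin (m + 1) =>
            s (1 + l.1 + k.1) - α ^ 2 * s (l.1 + k.1)).det := by
  intro m
  have hHdet := hD m
  have hpos : (Matrix.of fun l k : Fin (m + 1) =>
      s (1 + l.1 + k.1) - α ^ 2 * s (l.1 + k.1)).PosDef := by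
    have hH : (Matrix.of fun i k : Fin (m + 1) => s (i.1 + k.1)).PosDef := by
      have h := posSemidef_moments μ (fun _ => 1) (by simp) (by simpa using hint) (m + 1)
      simp only [mul_one, ← hs] at h
      rw [h.posDef_iff_det_ne_zero, ← hHdet]
      exact (hDpos _).ne'
    have hexp : ∀ (j : ℕ) (t : ℝ), t ^ j * (t - a) = t ^ (j + 1) - a * t ^ j := by
      intro j t
      ring
    have hM := posSemidef_moments μ (fun t => t - a)
      (by filter_upwards [hsupp] with t ht using sub_nonneg.2 ht)
      (fun j => by
        simp only [hexp]
        exact (hint (j + 1)).sub ((hint j).const_mul a)) (m + 1)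
    have hsum := (hH.smul (sub_pos.2 hα)).add_posSemidef hM
    convert hsum using 1
    ext l k
    simp only [Matrix.add_apply, Matrix.smul_apply, Matrix.of_apply, smul_eq_mul, hexp]
    rw [integral_sub (hint _) ((hint _).const_mul a), integral_const_mul, ← hs, ← hs,
      show 1 + l.1 + k.1 = l.1 + k.1 + 1 by ring]
    ring
  refine ⟨hpos.det_pos, ?_⟩
  have hmain := det_shifted_hankel (P (m + 1)) (hPmonic _) s (α ^ 2) (by
    intro k hk
    rw [hPdeg] at hk
    rw [← hPorth (m + 1) k hk]
    simp_rw [eval_eq_sum_range, Finset.sum_mul, mul_assoc, ← pow_add]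
    rw [integral_finsetSum _ fun i _ => (hint (i + k)).const_mul _]
    simp_rw [integral_const_mul, ← hs])
  rw [hPdeg, ← hHdet] at hmain
  have hne := (hDpos (m + 1)).ne'
  have hsq : ((-1 : ℝ) ^ (m + 1)) * (-1) ^ (m + 1) = 1 := by
    rw [← mul_pow]
    norm_num
  rw [hmain, div_mul_eq_mul_div, eq_div_iff hne]
  linear_combination (-(P (m + 1)).eval (α ^ 2) * D (m + 1)) * hsq
end

section
/- Let a > 0 and 0 < α < √a. Then for every j ≥ 0 the polynomial X − α² divides P_{j+1}(X) − (P_{j+1}(α²)/P_j(α²))·P_j(X) in ℝ[X], the quotient P̃_j^{(α)}(X) = (P_{j+1}(X) − (P_{j+1}(α²)/P_j(α²))·P_j(X))/(X − α²) is a monic polynomial of degree j, and ∫ P̃_j^{(α)}(t)·t^k·(t − α²) dμ(t) = 0 for all 0 ≤ k < j; that is, (P̃_j^{(α)}) are the monic orthogonal polynomials of the measure (t − α²)·dμ(t). -/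
/-!
With `β = α²` and `c = P_{j+1}(β) / P_j(β)`, the polynomial `Q = P_{j+1} - c·P_j` vanishes at `β`, so
`Q = (X - β)·R` with `R = Q /ₘ (X - β)`. Since `deg (c·P_j) ≤ j`, `Q` is monic of degree `j + 1`,
hence `R` is monic of degree `j`. Finally `∫ R(t)·t^k·(t - β) dμ = ∫ Q(t)·t^k dμ`, which vanishes
for `k < j` because `P_{j+1}` and `P_j` are both orthogonal to `t^k`.
-/

open Polynomial MeasureTheory

theorem integrable_eval_mul_pow {μ : Measure ℝ}
    (hint : ∀ j : ℕ, Integrable (fun t : ℝ => t ^ j) μ) (p : Polynomial ℝ) (k : ℕ) :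
    Integrable (fun t : ℝ => p.eval t * t ^ k) μ := by
  simp only [eval_eq_sum_range, Finset.sum_mul, mul_assoc, ← pow_add]
  exact integrable_finsetSum _ fun i _ => (hint (i + k)).const_mul _

/-- for `0 < α < √a`, the polynomial `X - α²` divides
`P_{j+1} - (P_{j+1}(α²)/P_j(α²))·P_j`, the quotient `P̃_j^{(α)}` is monic of
degree `j`, and `∫ P̃_j^{(α)}(t)·t^k·(t - α²) dμ(t) = 0` for `0 ≤ k < j`, i.e. the
`P̃_j^{(α)}` are the monic orthogonal polynomials of `(t - α²)·dμ(t)`. -/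
theorem stmt_14
    (a : ℝ) (ha : 0 < a)
    (μ : Measure ℝ) [IsProbabilityMeasure μ]
    (hsupp : ∀ᵐ t ∂μ, a ≤ t)
    (hint : ∀ j : ℕ, Integrable (fun t : ℝ => t ^ j) μ)
    (s : ℕ → ℝ) (hs : ∀ j, s j = ∫ t, t ^ j ∂μ)
    (hDpos : ∀ n : ℕ, 0 < (Matrix.of fun i k : Fin (n + 1) => s (i.1 + k.1)).det)
    (P : ℕ → Polynomial ℝ)
    (hPmonic : ∀ j, (P j).Monic) (hPdeg : ∀ j, (P j).natDegree = j)
    (hPorth : ∀ j k : ℕ, k < j → ∫ t, (P j).eval t * t ^ k ∂μ = 0)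
    (α : ℝ) (hα0 : 0 < α) (hαa : α < Real.sqrt a)
    (hP0 : ∀ j : ℕ, 0 < (-1 : ℝ) ^ j * (P j).eval (α ^ 2)) :
    ∀ j : ℕ,
      (X - C (α ^ 2)) ∣
        (P (j + 1) - C ((P (j + 1)).eval (α ^ 2) / (P j).eval (α ^ 2)) * P j) ∧
      ((P (j + 1) - C ((P (j + 1)).eval (α ^ 2) / (P j).eval (α ^ 2)) * P j)
        /ₘ (X - C (α ^ 2))).Monic ∧
      ((P (j + 1) - C ((P (j + 1)).eval (α ^ 2) / (P j).eval (α ^ 2)) * P j)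
        /ₘ (X - C (α ^ 2))).natDegree = j ∧
      (∀ k : ℕ, k < j →
        ∫ t, ((P (j + 1) - C ((P (j + 1)).eval (α ^ 2) / (P j).eval (α ^ 2)) * P j)
          /ₘ (X - C (α ^ 2))).eval t * t ^ k * (t - α ^ 2) ∂μ = 0) := by
  intro j
  have hne : (P j).eval (α ^ 2) ≠ 0 := fun h => by simpa [h] using hP0 j
  generalize α ^ 2 = β at hne ⊢
  generalize hc : (P (j + 1)).eval β / (P j).eval β = c
  have hdeg : (C c * P j).degree < (P (j + 1)).degree := by
    refine degree_lt_degree ((natDegree_C_mul_le c (P j)).trans_lt ?_)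
    rw [hPdeg, hPdeg]
    exact j.lt_succ_self
  have hQmonic : (P (j + 1) - C c * P j).Monic := (hPmonic (j + 1)).sub_of_left hdeg
  have hQdeg : (P (j + 1) - C c * P j).natDegree = j + 1 := by
    rw [natDegree_eq_of_degree_eq (degree_sub_eq_left_of_degree_lt hdeg), hPdeg]
  have hdvd : (X - C β) ∣ (P (j + 1) - C c * P j) := by
    rw [dvd_iff_isRoot, IsRoot, eval_sub, eval_mul, eval_C, ← hc, div_mul_cancel₀ _ hne, sub_self]
  have hfac := mul_divByMonic_eq_iff_isRoot.2 (dvd_iff_isRoot.1 hdvd)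
  refine ⟨hdvd, (monic_X_sub_C β).of_mul_monic_left (hfac.symm ▸ hQmonic), ?_, fun k hk => ?_⟩
  · rw [natDegree_divByMonic _ (monic_X_sub_C β), hQdeg, natDegree_X_sub_C, Nat.add_sub_cancel]
  · have hcongr : ∀ t : ℝ,
        ((P (j + 1) - C c * P j) /ₘ (X - C β)).eval t * t ^ k * (t - β) =
          (P (j + 1)).eval t * t ^ k - c * ((P j).eval t * t ^ k) := fun t => by
      have h := congrArg (eval t) hfac
      simp only [eval_mul, eval_sub, eval_X, eval_C] at h
      linear_combination t ^ k * h
    simp only [hcongr]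
    rw [integral_sub (integrable_eval_mul_pow hint _ k)
      ((integrable_eval_mul_pow hint _ k).const_mul c), integral_const_mul,
      hPorth (j + 1) k (by omega), hPorth j k hk, mul_zero, sub_zero]
end

section
/- Let a > 0 and 0 < α < √a, and set u_j^{(α)} = −P_{j+1}(α²)/P_j(α²) and l_j^{(α)} = c_{j−1}/u_{j−1}^{(α)} for j ≥ 1. With Φ_{2j}^{(α)}(X) = P_j(X²) and Φ_{2j+1}^{(α)}(X) = (X + α)·P̃_j^{(α)}(X²), the following polynomial recurrences hold: X·Φ_0^{(α)} = −α·Φ_0^{(α)} + Φ_1^{(α)}; for every j ≥ 1, X·Φ_{2j}^{(α)} = l_j^{(α)}·Φ_{2j−1}^{(α)} − α·Φ_{2j}^{(α)} + Φ_{2j+1}^{(α)}; and for every j ≥ 0, X·Φ_{2j+1}^{(α)} = u_j^{(α)}·Φ_{2j}^{(α)} + α·Φ_{2j+1}^{(α)} + Φ_{2j+2}^{(α)}. (These identities express that 𝔘𝔏 + α·I is the monic tridiagonal Jacobi matrix with diagonal −α, α, −α, α, …, subdiagonal u_0^{(α)}, l_1^{(α)}, u_1^{(α)}, l_2^{(α)},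 … and superdiagonal 1, whose monic orthogonal polynomials are the Φ_n^{(α)}.) -/
/-!
Write `p j = P j (α²)`, which is nonzero, so `u j = -p (j+1) / p j` is nonzero. The defining equation
of the kernel polynomials reads `(X - α²) P̃ j = P (j+1) + u j P j`. Evaluating the three-term
recurrence at `α²` and dividing by `p (j+1)` gives `b (j+1) - α² = l (j+1) + u (j+1)`, which together
with `l (j+1) * u j = c j` is the factorisation of the shifted Jacobi matrix of `P`. After
cancelling `X - α²` it yields the companion relation `P (j+1) = l (j+1) P̃ j + P̃ (j+1)`, with
`P 0 = P̃ 0` at the bottom. The claimed recurrences are these relations with `X²` substituted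
for `X`, using `X² - α² = (X - α)(X + α)`.
-/

open Polynomial MeasureTheory

/-- the polynomials `Φ^{(α)}_n` of the shifted extended Darboux
transformation satisfy the three-term recurrences of the monic Jacobi matrix
`𝔘𝔏 + α·I` with diagonal `-α, α, -α, α, …`, subdiagonal
`u_0^{(α)}, l_1^{(α)}, u_1^{(α)}, l_2^{(α)}, …` and superdiagonal `1`. -/
theorem stmt_16
    (a : ℝ) (ha : 0 < a)
    (μ : Measure ℝ) [IsProbabilityMeasure μ]
    (hsupp : ∀ᵐ t ∂μ, a ≤ t)
    (hint : ∀ j : ℕ, Integrable (fun t : ℝ => t ^ j) μ)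
    (s : ℕ → ℝ) (hs : ∀ j, s j = ∫ t, t ^ j ∂μ)
    (hDpos : ∀ n : ℕ, 0 < (Matrix.of fun i k : Fin (n + 1) => s (i.1 + k.1)).det)
    (P : ℕ → Polynomial ℝ)
    (hPmonic : ∀ j, (P j).Monic) (hPdeg : ∀ j, (P j).natDegree = j)
    (hPorth : ∀ j k : ℕ, k < j → ∫ t, (P j).eval t * t ^ k ∂μ = 0)
    (b c : ℕ → ℝ) (hc : ∀ j, 0 < c j)
    (hrec0 : X * P 0 = P 1 + C (b 0) * P 0)
    (hrec : ∀ j : ℕ, X * P (j + 1) = P (j + 2) + C (b (j + 1)) * P (j + 1) + C (c j) * P j)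
    (α : ℝ) (hα0 : 0 < α) (hαa : α < Real.sqrt a)
    (hP0 : ∀ j : ℕ, 0 < (-1 : ℝ) ^ j * (P j).eval (α ^ 2))
    (u : ℕ → ℝ) (hu : ∀ j, u j = -((P (j + 1)).eval (α ^ 2)) / (P j).eval (α ^ 2))
    (l : ℕ → ℝ) (hl : ∀ j, l (j + 1) = c j / u j)
    (Ptα : ℕ → Polynomial ℝ)
    (hPtα : ∀ j, (X - C (α ^ 2)) * Ptα j =
      P (j + 1) - C ((P (j + 1)).eval (α ^ 2) / (P j).eval (α ^ 2)) * P j)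
    (Φ : ℕ → Polynomial ℝ)
    (hΦeven : ∀ j, Φ (2 * j) = (P j).comp (X ^ 2))
    (hΦodd : ∀ j, Φ (2 * j + 1) = (X + C α) * (Ptα j).comp (X ^ 2)) :
    (X * Φ 0 = C (-α) * Φ 0 + Φ 1) ∧
    (∀ j : ℕ, X * Φ (2 * j + 2) =
      C (l (j + 1)) * Φ (2 * j + 1) + C (-α) * Φ (2 * j + 2) + Φ (2 * j + 3)) ∧
    (∀ j : ℕ, X * Φ (2 * j + 1) =
      C (u j) * Φ (2 * j) + C α * Φ (2 * j + 1) + Φ (2 * j + 2)) := by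
  have hp : ∀ j, (P j).eval (α ^ 2) ≠ 0 := fun j h => by
    have := hP0 j
    simp [h] at this
  have hune : ∀ j, u j ≠ 0 := fun j => by
    rw [hu]
    exact div_ne_zero (neg_ne_zero.2 (hp _)) (hp _)
  have hX : (X - C (α ^ 2) : ℝ[X]) ≠ 0 := X_sub_C_ne_zero _
  have hker : ∀ j, (X - C (α ^ 2)) * Ptα j = P (j + 1) + C (u j) * P j := fun j => by
    rw [hPtα, hu, neg_div, C_neg]
    ring
  have hone : P 0 = 1 := by
    simpa using (hPmonic 0).natDegree_eq_zero.1 (hPdeg 0)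
  have hbase : P 0 = Ptα 0 := by
    apply mul_left_cancel₀ hX
    have hb : b 0 = α ^ 2 + u 0 := by
      have := congrArg (eval (α ^ 2)) hrec0
      simp only [hone, eval_add, eval_mul, eval_X, eval_C, eval_one] at this
      rw [hu, hone, eval_one]
      linarith
    rw [hker, sub_mul, hrec0, hb, C_add]
    ring
  have hstep : ∀ j, P (j + 1) = C (l (j + 1)) * Ptα j + Ptα (j + 1) := fun j => by
    apply mul_left_cancel₀ hX
    have hlu : c j = l (j + 1) * u j := by
      rw [hl, div_mul_cancel₀ _ (hune j)]
    have hb : b (j + 1) = α ^ 2 + l (j + 1) + u (j + 1) := by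
      have h := congrArg (eval (α ^ 2)) (hrec j)
      simp only [eval_add, eval_mul, eval_X, eval_C] at h
      have h0 := hp j
      have h1 := hp (j + 1)
      rw [hl, hu, hu]
      field_simp
      linarith
    calc (X - C (α ^ 2)) * P (j + 1)
        = X * P (j + 1) - C (α ^ 2) * P (j + 1) := by ring
      _ = C (l (j + 1)) * (P (j + 1) + C (u j) * P j)
            + (P (j + 2) + C (u (j + 1)) * P (j + 1)) := by
          rw [hrec, hb, hlu, C_add, C_add, C_mul]
          ring
      _ = (X - C (α ^ 2)) * (C (l (j + 1)) * Ptα j + Ptα (j + 1)) := by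
          rw [← hker, ← hker]
          ring
  refine ⟨?_, fun j => ?_, fun j => ?_⟩
  · have h0 := hΦeven 0
    have h1 := hΦodd 0
    rw [mul_zero] at h0
    rw [mul_zero, zero_add] at h1
    rw [h1, h0, ← hbase, C_neg]
    ring
  · have h := congrArg (fun q => q.comp (X ^ 2)) (hstep j)
    simp only [add_comp, mul_comp, C_comp] at h
    rw [show 2 * j + 2 = 2 * (j + 1) by ring, show 2 * j + 3 = 2 * (j + 1) + 1 by ring,
      hΦeven, hΦodd, hΦodd, C_neg]
    linear_combination (X + C α) * h
  · have h := congrArg (fun q => q.comp (X ^ 2)) (hker j)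
    simp only [add_comp, sub_comp, mul_comp, pow_comp, C_comp, X_comp, C_pow] at h
    rw [show 2 * j + 2 = 2 * (j + 1) by ring, hΦeven, hΦeven, hΦodd]
    linear_combination h
end

section
/- The operator G∘B is self-adjoint on H (i.e. ⟨(G∘B)x, y⟩ = ⟨x, (G∘B)y⟩ for all x, y ∈ H, which says that B is self-adjoint in the Krein space ℓ²(G)), and the spectrum of B equals {λ ∈ ℂ : λ² ∈ spectrum(A)}; in particular, spectrum(B) is contained in ℝ ∪ iℝ. -/
/-!
Let `V e_j = e_{2j}` and `W e_j = e_{2j+1}`, isometries with adjoints `P`, `Q` satisfying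
`P V = Q W = 1`, `P W = Q V = 0` and `V P + W Q = 1`; they identify `H` with `H ⊕ H` (even and odd
coordinates). The formulas for `B` and `G` become `B W = V`, `B V = W A`, `G W = V`, `G V = W`, so
that `B` is the block operator `(x₀, x₁) ↦ (x₁, A x₀)`.

Hence `G B = V A P + W Q`, which is self-adjoint because `A` is. Moreover `B² = A ⊕ A`: if `z² - A`
is invertible, so is `z² - B² = (z - B)(z + B)`, and therefore its commuting factor `z - B`.
Conversely, if `z - B` has inverse `S`, then `P S W` is the inverse of `z² - A`. This is
`spectrum_block`, which is purely algebraic. Finally `z²` is real for `z` in the spectrum of `B`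
because `A` is self-adjoint, so `z` is real or imaginary.
-/

open scoped InnerProductSpace

/-- The relations say that `V, W` are the inclusions and `P, Q` the projections of a decomposition
into two copies of one space, in which `B` is the block matrix with rows `(0, 1)` and `(A, 0)`. -/
theorem spectrum_block {R : Type*} [Ring R] [Algebra ℂ R] {A B V W P Q : R}
    (hPV : P * V = 1) (hQW : Q * W = 1) (hPW : P * W = 0) (hQV : Q * V = 0)
    (hsum : V * P + W * Q = 1) (hBW : B * W = V) (hBV : B * V = W * A) :
    spectrum ℂ B = {z : ℂ | z ^ 2 ∈ spectrum ℂ A} := by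
  have hB : B = W * A * P + V * Q := by
    rw [← mul_one B, ← hsum, mul_add, ← mul_assoc, ← mul_assoc, hBV, hBW]
  have hPB : P * B = Q := by rw [hB]; simp [mul_add, ← mul_assoc, hPW, hPV]
  have hQB : Q * B = A * P := by rw [hB]; simp [mul_add, ← mul_assoc, hQW, hQV]
  ext z
  simp only [Set.mem_ofPred_eq, spectrum.mem_iff, not_iff_not]
  set ζ := algebraMap ℂ R z with hζ
  have hc : ∀ x, ζ * x = x * ζ := fun x => Algebra.commutes z x
  have hc2 : ∀ x, ζ ^ 2 * x = x * ζ ^ 2 := fun x => by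
    rw [pow_two, mul_assoc, hc x, ← mul_assoc, hc x, mul_assoc]
  have hf : ζ ^ 2 - B ^ 2 = (ζ + B) * (ζ - B) := (Commute.sq_sub_sq (hc B))
  have hf' : ζ ^ 2 - B ^ 2 = (ζ - B) * (ζ + B) := by
    rw [hf, add_mul, mul_sub, mul_sub, sub_mul, mul_add, mul_add, hc B]; abel
  rw [map_pow, ← hζ]
  constructor
  · rintro ⟨u, hu⟩
    obtain ⟨S, h1, h2⟩ : ∃ S, (ζ - B) * S = 1 ∧ S * (ζ - B) = 1 :=
      ⟨↑u⁻¹, by rw [← hu]; simp, by rw [← hu]; simp⟩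
    have e1 : (ζ ^ 2 - A) * P = P * (ζ ^ 2 - B ^ 2) := by
      have : P * B ^ 2 = A * P := by rw [pow_two, ← mul_assoc, hPB, hQB]
      rw [mul_sub, this, sub_mul, hc2]
    have e2 : W * (ζ ^ 2 - A) = (ζ ^ 2 - B ^ 2) * W := by
      have : B ^ 2 * W = W * A := by rw [pow_two, mul_assoc, hBW, hBV]
      rw [sub_mul, this, mul_sub, hc2]
    -- `P S W` inverts `z² - A`: moving `P` or `W` across turns `z² - A` into `z² - B²`.
    have e3 : P * ((ζ + B) * W) = 1 := by
      rw [add_mul, hBW, hc, mul_add, ← mul_assoc, hPW, hPV]; simp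
    refine ⟨⟨ζ ^ 2 - A, P * S * W, ?_, ?_⟩, rfl⟩
    · calc (ζ ^ 2 - A) * (P * S * W) = ((ζ ^ 2 - A) * P) * S * W := by noncomm_ring
        _ = P * ((ζ + B) * ((ζ - B) * S) * W) := by rw [e1, hf]; simp only [mul_assoc]
        _ = 1 := by rw [h1, mul_one, e3]
    · calc P * S * W * (ζ ^ 2 - A) = P * S * (W * (ζ ^ 2 - A)) := by rw [mul_assoc]
        _ = P * ((S * (ζ - B)) * (ζ + B) * W) := by rw [e2, hf']; simp only [mul_assoc]
        _ = 1 := by rw [h2, one_mul, e3]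
  · rintro ⟨u, hu⟩
    obtain ⟨S, h1, h2⟩ : ∃ S, (ζ ^ 2 - A) * S = 1 ∧ S * (ζ ^ 2 - A) = 1 :=
      ⟨↑u⁻¹, by rw [← hu]; simp, by rw [← hu]; simp⟩
    -- `x ↦ V x P + W x Q` is the diagonal embedding `x ↦ x ⊕ x`.
    have hmul : ∀ x y, (V * x * P + W * x * Q) * (V * y * P + W * y * Q)
        = V * (x * y) * P + W * (x * y) * Q := fun x y => by
      calc _ = V * x * (P * V) * y * P + V * x * (P * W) * y * Q
            + W * x * (Q * V) * y * P + W * x * (Q * W) * y * Q := by noncomm_ring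
        _ = _ := by rw [hPV, hPW, hQV, hQW]; noncomm_ring
    have hsq : ζ ^ 2 - B ^ 2 = V * (ζ ^ 2 - A) * P + W * (ζ ^ 2 - A) * Q := by
      have h3 : B ^ 2 = V * A * P + W * A * Q := by
        rw [pow_two]; nth_rw 2 [hB]
        rw [mul_add, ← mul_assoc, ← mul_assoc, ← mul_assoc, hBW, hBV]
      have h4 : ζ ^ 2 = V * ζ ^ 2 * P + W * ζ ^ 2 * Q := by
        rw [← hc2, ← hc2, mul_assoc, mul_assoc, ← mul_add, hsum, mul_one]
      rw [h3]; nth_rw 1 [h4]; noncomm_ring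
    have hu2 : IsUnit ((ζ - B) * (ζ + B)) := by
      rw [← hf', hsq]
      exact ⟨⟨_, V * S * P + W * S * Q, by rw [hmul, h1]; simpa using hsum,
        by rw [hmul, h2]; simpa using hsum⟩, rfl⟩
    have hcomm : Commute (ζ - B) (ζ + B) := hf'.symm.trans hf
    exact (hcomm.isUnit_mul_iff.1 hu2).1

local notation "ℓ²" => lp (fun _ : ℕ => ℂ) 2

theorem inner_single_single (m n : ℕ) :
    ⟪(lp.single 2 m (1 : ℂ) : ℓ²), lp.single 2 n (1 : ℂ)⟫_ℂ = if m = n then 1 else 0 := by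
  rw [lp.inner_single_left, lp.coeFn_single, Pi.single_apply]
  split_ifs <;> simp

theorem clm_ext_single {S T : ℓ² →L[ℂ] ℓ²}
    (h : ∀ n, S (lp.single 2 n (1 : ℂ)) = T (lp.single 2 n (1 : ℂ))) : S = T := by
  ext1 f
  have hf := lp.hasSum_single (by simp) f
  have hn : ∀ n, S (lp.single 2 n (f n)) = T (lp.single 2 n (f n)) := fun n => by
    have : lp.single 2 n (f n) = f n • (lp.single 2 n (1 : ℂ) : ℓ²) := by
      rw [← lp.single_smul]; simp
    rw [this, map_smul, map_smul, h]
  have h1 := hf.mapL S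
  have h2 := hf.mapL T
  simp only [hn] at h1
  exact h1.unique h2

theorem ext_inner_single {x y : ℓ²}
    (h : ∀ n, ⟪(lp.single 2 n (1 : ℂ) : ℓ²), x⟫_ℂ = ⟪(lp.single 2 n (1 : ℂ) : ℓ²), y⟫_ℂ) :
    x = y := by
  ext n
  simpa [lp.inner_single_left] using h n

/-- The operator moving the standard basis along an injection `g` of the index set. -/
theorem exists_clm_single (g : ℕ → ℕ) (hg : Function.Injective g) :
    ∃ V : ℓ² →L[ℂ] ℓ², (∀ n, V (lp.single 2 n (1 : ℂ)) = lp.single 2 (g n) (1 : ℂ)) := by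
  have ho : Orthonormal ℂ (fun n => (lp.single 2 (g n) (1 : ℂ) : ℓ²)) := by
    rw [orthonormal_iff_ite]
    intro i j
    simp only [inner_single_single, hg.eq_iff]
  refine ⟨ho.orthogonalFamily.linearIsometry.toContinuousLinearMap, fun n => ?_⟩
  simp [OrthogonalFamily.linearIsometry_apply_single]

/-- `G∘B` is self-adjoint on `H = ℓ²(ℕ, ℂ)` (i.e. `B` is
self-adjoint in the Krein space `ℓ²(G)`), and
`spectrum B = {λ : λ² ∈ spectrum A} ⊆ ℝ ∪ iℝ`. -/
theorem stmt_18
    (b c : ℕ → ℝ)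
    (hbbdd : ∃ M : ℝ, ∀ n, |b n| ≤ M) (hcbdd : ∃ M : ℝ, ∀ n, |c n| ≤ M)
    (hc : ∀ j, 0 < c j)
    (A B G : lp (fun _ : ℕ => ℂ) 2 →L[ℂ] lp (fun _ : ℕ => ℂ) 2)
    (e : ℕ → lp (fun _ : ℕ => ℂ) 2) (he : ∀ n, e n = lp.single 2 n (1 : ℂ))
    (hA0 : A (e 0) = (b 0 : ℂ) • e 0 + (Real.sqrt (c 0) : ℂ) • e 1)
    (hA : ∀ n : ℕ, A (e (n + 1)) = (Real.sqrt (c n) : ℂ) • e n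
      + (b (n + 1) : ℂ) • e (n + 1) + (Real.sqrt (c (n + 1)) : ℂ) • e (n + 2))
    (hB0 : B (e 0) = (b 0 : ℂ) • e 1 + (Real.sqrt (c 0) : ℂ) • e 3)
    (hBeven : ∀ j : ℕ, B (e (2 * (j + 1))) = (Real.sqrt (c j) : ℂ) • e (2 * j + 1)
      + (b (j + 1) : ℂ) • e (2 * j + 3) + (Real.sqrt (c (j + 1)) : ℂ) • e (2 * j + 5))
    (hBodd : ∀ j : ℕ, B (e (2 * j + 1)) = e (2 * j))
    (hGeven : ∀ j : ℕ, G (e (2 * j)) = e (2 * j + 1))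
    (hGodd : ∀ j : ℕ, G (e (2 * j + 1)) = e (2 * j)) :
    (∀ x y : lp (fun _ : ℕ => ℂ) 2, ⟪(G ∘L B) x, y⟫_ℂ = ⟪x, (G ∘L B) y⟫_ℂ) ∧
    spectrum ℂ B = {z : ℂ | z ^ 2 ∈ spectrum ℂ A} ∧
    spectrum ℂ B ⊆ {z : ℂ | z.im = 0} ∪ {z : ℂ | z.re = 0} := by
  have hin : ∀ m n, ⟪e m, e n⟫_ℂ = if m = n then 1 else 0 := fun m n => by
    rw [he, he, inner_single_single]
  have hext : ∀ {S T : ℓ² →L[ℂ] ℓ²}, (∀ n, S (e n) = T (e n)) → S = T := fun h =>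
    clm_ext_single fun n => by simpa only [he] using h n
  have hexi : ∀ {x y : ℓ²}, (∀ n, ⟪e n, x⟫_ℂ = ⟪e n, y⟫_ℂ) → x = y := fun h =>
    ext_inner_single fun n => by simpa only [he] using h n
  obtain ⟨V, hV⟩ := exists_clm_single (fun n => 2 * n) (fun a b h => by simpa using h)
  obtain ⟨W, hW⟩ := exists_clm_single (fun n => 2 * n + 1) (fun a b h => by simpa using h)
  simp only [← he] at hV hW
  have hAsa : IsSelfAdjoint A := by
    rw [ContinuousLinearMap.isSelfAdjoint_iff']
    refine hext fun n => hexi fun m => ?_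
    rw [ContinuousLinearMap.adjoint_inner_right]
    rcases m with _ | m <;> rcases n with _ | n <;>
      simp only [hA0, hA, inner_add_left, inner_add_right, inner_smul_left, inner_smul_right,
        hin, Complex.conj_ofReal]
    · simp
    · rcases n with _ | n <;> simp [eq_comm]
    · rcases m with _ | m <;> simp
    · rcases lt_trichotomy m n with h | rfl | h
      · obtain ⟨k, rfl⟩ := Nat.exists_eq_add_of_lt h
        rcases k with _ | k
        · simp; omega
        · simp; grind
      · simp
      · obtain ⟨k, rfl⟩ := Nat.exists_eq_add_of_lt h
        rcases k with _ | k
        · simp; omega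
        · simp; grind
  set P := ContinuousLinearMap.adjoint V with hP
  set Q := ContinuousLinearMap.adjoint W with hQ
  have hPV : P * V = 1 := hext fun n => hexi fun m => by
    simp [hP, ContinuousLinearMap.adjoint_inner_right, hV, hin]
  have hQW : Q * W = 1 := hext fun n => hexi fun m => by
    simp [hQ, ContinuousLinearMap.adjoint_inner_right, hW, hin]
  have hPW : P * W = 0 := hext fun n => hexi fun m => by
    simp [hP, ContinuousLinearMap.adjoint_inner_right, hV, hW, hin]; omega
  have hQV : Q * V = 0 := hext fun n => hexi fun m => by
    simp [hQ, ContinuousLinearMap.adjoint_inner_right, hV, hW, hin]; omega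
  have hsum : V * P + W * Q = 1 := hext fun n => by
    rcases Nat.even_or_odd' n with ⟨k, rfl | rfl⟩
    · have h1 := DFunLike.congr_fun hPV (e k)
      have h2 := DFunLike.congr_fun hQV (e k)
      simp [hV] at h1 h2
      simp [h1, h2, hV]
    · have h1 := DFunLike.congr_fun hPW (e k)
      have h2 := DFunLike.congr_fun hQW (e k)
      simp [hW] at h1 h2
      simp [h1, h2, hW]
  have hBW : B * W = V := hext fun n => by simp [hV, hW, hBodd]
  have hBV : B * V = W * A := hext fun n => by
    rcases n with _ | n
    · simp [hV, hW, hB0, hA0, -Complex.coe_smul]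
    · simp [hV, hW, hBeven, hA, -Complex.coe_smul]; rfl
  have hGW : G * W = V := hext fun n => by simp [hV, hW, hGodd]
  have hGV : G * V = W := hext fun n => by simp [hV, hW, hGeven]
  have hspec := spectrum_block hPV hQW hPW hQV hsum hBW hBV
  have hGB : G * B = V * A * P + W * Q := by
    rw [← mul_one (G * B), ← hsum, mul_add, mul_assoc G, mul_assoc G, ← mul_assoc B,
      ← mul_assoc B, hBV, hBW, ← mul_assoc, ← mul_assoc, ← mul_assoc, hGW, hGV]
  have hGBsa : IsSelfAdjoint (G * B) := by
    rw [hGB]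
    exact (hAsa.conjugate V).add (IsSelfAdjoint.mul_star_self W)
  refine ⟨fun x y => ?_, hspec, fun z hz => ?_⟩
  · exact ContinuousLinearMap.isSelfAdjoint_iff_isSymmetric.1 hGBsa x y
  · rw [hspec] at hz
    have h := hAsa.im_eq_zero_of_mem_spectrum hz
    rw [pow_two, Complex.mul_im] at h
    have h' : z.re * z.im = 0 := by linarith
    rcases mul_eq_zero.1 h' with h | h
    · exact Or.inr h
    · exact Or.inl h
end

section
/- Assume in addition that A is nonnegative, i.e. ⟨A x, x⟩ is real and ≥ 0 for every x ∈ H (as holds when the Jacobi matrix J_s corresponds to a Stieltjes function). Then Re⟨(G∘B)x, x⟩ ≥ 0 for every x ∈ H (B is nonnegative in the Krein space ℓ²(G), hence definitizable by the polynomial p(λ) = λ), and the spectrum of B equals {λ ∈ ℂ : λ² ∈ spectrum(A)} and is contained in ℝ. -/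
/-!
Splitting `ℓ²` into its even and odd coordinates, through the isometries `V e_j = e_{2j}` and
`W e_j = e_{2j+1}`, turns `B` into the operator matrix `(x, y) ↦ (y, A x)` and `G` into the swap of
the two components. Hence `G ∘ B` is `A ⊕ 1`, which is nonnegative, and
`B² = A ⊕ A`. The spectral identity is purely algebraic (`isUnit_sub_iff`): if `z² - A` is
invertible, so is `z² - B² = (z - B)(z + B)`, hence `z - B`; conversely, an inverse `S` of `z - B`
yields the inverse `V* S W` of `z² - A`. Finally, the spectrum of the nonnegative operator `A`
lies in `[0, ∞)`, so every `z` with `z²` in it is real.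
-/

open scoped InnerProductSpace

namespace EvenOdd

/-- The elements `v, w, p, q` encode a decomposition of the unit as `v p + w q` with
`p v = q w = 1`, and `v q + w a p` is the operator matrix `(x, y) ↦ (y, a x)` in it. Its
resolvent set is the preimage under squaring of the resolvent set of `a`. -/
lemma isUnit_sub_iff {R : Type*} [Ring R] [Algebra ℂ R] {a v w p q : R}
    (hpv : p * v = 1) (hqw : q * w = 1) (hpw : p * w = 0) (hqv : q * v = 0)
    (hvw : v * p + w * q = 1) (z : ℂ) :
    IsUnit (algebraMap ℂ R z - (v * q + w * a * p)) ↔ IsUnit (algebraMap ℂ R (z ^ 2) - a) := by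
  have hpv' (x : R) : p * (v * x) = x := by rw [← mul_assoc, hpv, one_mul]
  have hqw' (x : R) : q * (w * x) = x := by rw [← mul_assoc, hqw, one_mul]
  have hpw' (x : R) : p * (w * x) = 0 := by rw [← mul_assoc, hpw, zero_mul]
  have hqv' (x : R) : q * (v * x) = 0 := by rw [← mul_assoc, hqv, zero_mul]
  constructor
  · rintro ⟨u, hu⟩
    have hS1 : (algebraMap ℂ R z - (v * q + w * a * p)) * ↑u⁻¹ = 1 := by rw [← hu]; simp
    have hS2 : ↑u⁻¹ * (algebraMap ℂ R z - (v * q + w * a * p)) = 1 := by rw [← hu]; simp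
    set S : R := ↑u⁻¹
    have h1 : (algebraMap ℂ R (z ^ 2) - a) * p
        = (z • p + q) * (algebraMap ℂ R z - (v * q + w * a * p)) := by
      simp only [Algebra.algebraMap_eq_smul_one, mul_add, add_mul, mul_sub, sub_mul,
        smul_mul_assoc, mul_smul_comm, mul_assoc, hpv', hqw', hpw', hqv', one_mul, mul_one,
        smul_zero, smul_add, smul_smul, pow_two]
      abel
    have h2 : w * (algebraMap ℂ R (z ^ 2) - a)
        = (algebraMap ℂ R z - (v * q + w * a * p)) * (v + z • w) := by
      simp only [Algebra.algebraMap_eq_smul_one, mul_add, add_mul, mul_sub, sub_mul,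
        smul_mul_assoc, mul_smul_comm, mul_assoc, hpv, hqw, hpw, hqv, one_mul, mul_one, mul_zero,
        smul_zero, smul_add, smul_sub, smul_smul, pow_two]
      abel
    refine isUnit_iff_exists.mpr ⟨p * S * w, ?_, ?_⟩
    · rw [← mul_assoc, ← mul_assoc, h1, mul_assoc (z • p + q), hS1]
      simp [add_mul, hpw, hqw]
    · rw [mul_assoc, h2, mul_assoc p, ← mul_assoc S, hS2]
      simp [mul_add, hpw, hpv]
  · rintro ⟨u, hu⟩
    have hR1 : (algebraMap ℂ R (z ^ 2) - a) * ↑u⁻¹ = 1 := by rw [← hu]; simp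
    have hR2 : ↑u⁻¹ * (algebraMap ℂ R (z ^ 2) - a) = 1 := by rw [← hu]; simp
    set r : R := ↑u⁻¹
    set m : R := algebraMap ℂ R (z ^ 2) - a with hm
    set B : R := v * q + w * a * p with hB
    have hcomm : Commute (algebraMap ℂ R z - B) (algebraMap ℂ R z + B) :=
      ((Commute.refl _).sub_left (Algebra.commutes z B).symm).add_right
        ((show Commute (algebraMap ℂ R z) B from Algebra.commutes z B).sub_left (Commute.refl B))
    have hB2 : B * B = v * a * p + w * a * q := by
      simp only [hB, mul_add, add_mul, mul_assoc, hpv', hqw', hpw', hqv', mul_zero, add_zero,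
        zero_add]
      abel
    have hprod : (algebraMap ℂ R z - B) * (algebraMap ℂ R z + B) = v * m * p + w * m * q := by
      have : (algebraMap ℂ R z - B) * (algebraMap ℂ R z + B)
          = algebraMap ℂ R (z ^ 2) * (v * p + w * q) - B * B := by
        rw [hvw, mul_one, mul_add, sub_mul, sub_mul, (Algebra.commutes z B), pow_two, map_mul]
        abel
      rw [this, hB2, hm]
      simp only [Algebra.algebraMap_eq_smul_one, mul_add, mul_sub, sub_mul,
        smul_mul_assoc, mul_smul_comm, mul_assoc, one_mul]
      abel
    have hunit : IsUnit (v * m * p + w * m * q) := by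
      have hR1' (x : R) : m * (r * x) = x := by rw [← mul_assoc, hR1, one_mul]
      have hR2' (x : R) : r * (m * x) = x := by rw [← mul_assoc, hR2, one_mul]
      refine isUnit_iff_exists.mpr ⟨v * r * p + w * r * q, ?_, ?_⟩ <;>
      · simp only [mul_add, add_mul, mul_assoc, hpv', hqw', hpw', hqv', hR1', hR2', mul_zero,
          add_zero, zero_add, hvw]
    rw [← hprod] at hunit
    exact (hcomm.isUnit_mul_iff.mp hunit).1

/-- The Hilbert space `ℓ²(ℕ, ℂ)`. -/
noncomputable abbrev Seq : Type := lp (fun _ : ℕ => ℂ) 2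

/-- The `n`-th vector of the standard orthonormal basis. -/
noncomputable abbrev basisVec (n : ℕ) : Seq := lp.single 2 n (1 : ℂ)

lemma orthonormal_basisVec : Orthonormal ℂ basisVec := by
  rw [orthonormal_iff_ite]
  intro i j
  rw [lp.inner_single_left, lp.single_apply]
  by_cases h : i = j
  · subst h; simp
  · simp [h]

lemma ext_inner_basisVec {x y : Seq} (h : ∀ n, ⟪basisVec n, x⟫_ℂ = ⟪basisVec n, y⟫_ℂ) :
    x = y := by
  ext n
  simpa [lp.inner_single_left] using h n

/-- A continuous operator on `ℓ²` is determined by its values on the basis. -/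
lemma clm_ext {S T : Seq →L[ℂ] Seq} (h : ∀ n, S (basisVec n) = T (basisVec n)) : S = T := by
  ext1 x
  have hx := lp.hasSum_single (p := 2) (by simp) x
  have hsingle : ∀ n, (lp.single 2 n (x n) : Seq) = x n • basisVec n := by
    intro n
    rw [basisVec, ← lp.single_smul]
    simp
  have h1 := hx.mapL S
  have h2 := hx.mapL T
  have : (fun n => S (lp.single 2 n (x n))) = fun n => T (lp.single 2 n (x n)) := by
    funext n
    rw [hsingle, map_smul, map_smul, h]
  rw [this] at h1
  exact h1.unique h2

/-- An injective map of indices induces an isometry of `ℓ²` that acts on the basis through it. -/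
lemma exists_isometry (f : ℕ → ℕ) (hf : Function.Injective f) :
    ∃ V : Seq →ₗᵢ[ℂ] Seq, ∀ n, V (basisVec n) = basisVec (f n) := by
  have ho : Orthonormal ℂ (fun n => basisVec (f n)) := orthonormal_basisVec.comp f hf
  refine ⟨ho.orthogonalFamily.linearIsometry, fun n => ?_⟩
  rw [OrthogonalFamily.linearIsometry_apply_single]
  simp

end EvenOdd

open EvenOdd ContinuousLinearMap in
/-- if moreover `A` is nonnegative (`⟨Ax, x⟩` real and `≥ 0`), then
`Re ⟨(G∘B)x, x⟩ ≥ 0` for every `x` (`B` is nonnegative in the Krein space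
`ℓ²(G)`, hence definitizable by `p(λ) = λ`), and
`spectrum B = {λ : λ² ∈ spectrum A} ⊆ ℝ`. -/
theorem stmt_19
    (b c : ℕ → ℝ)
    (hbbdd : ∃ M : ℝ, ∀ n, |b n| ≤ M) (hcbdd : ∃ M : ℝ, ∀ n, |c n| ≤ M)
    (hc : ∀ j, 0 < c j)
    (A B G : lp (fun _ : ℕ => ℂ) 2 →L[ℂ] lp (fun _ : ℕ => ℂ) 2)
    (e : ℕ → lp (fun _ : ℕ => ℂ) 2) (he : ∀ n, e n = lp.single 2 n (1 : ℂ))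
    (hA0 : A (e 0) = (b 0 : ℂ) • e 0 + (Real.sqrt (c 0) : ℂ) • e 1)
    (hA : ∀ n : ℕ, A (e (n + 1)) = (Real.sqrt (c n) : ℂ) • e n
      + (b (n + 1) : ℂ) • e (n + 1) + (Real.sqrt (c (n + 1)) : ℂ) • e (n + 2))
    (hB0 : B (e 0) = (b 0 : ℂ) • e 1 + (Real.sqrt (c 0) : ℂ) • e 3)
    (hBeven : ∀ j : ℕ, B (e (2 * (j + 1))) = (Real.sqrt (c j) : ℂ) • e (2 * j + 1)
      + (b (j + 1) : ℂ) • e (2 * j + 3) + (Real.sqrt (c (j + 1)) : ℂ) • e (2 * j + 5))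
    (hBodd : ∀ j : ℕ, B (e (2 * j + 1)) = e (2 * j))
    (hGeven : ∀ j : ℕ, G (e (2 * j)) = e (2 * j + 1))
    (hGodd : ∀ j : ℕ, G (e (2 * j + 1)) = e (2 * j))
    (hApos : ∀ x : lp (fun _ : ℕ => ℂ) 2,
      (⟪A x, x⟫_ℂ).im = 0 ∧ 0 ≤ (⟪A x, x⟫_ℂ).re) :
    (∀ x : lp (fun _ : ℕ => ℂ) 2, 0 ≤ (⟪(G ∘L B) x, x⟫_ℂ).re) ∧
    spectrum ℂ B = {z : ℂ | z ^ 2 ∈ spectrum ℂ A} ∧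
    spectrum ℂ B ⊆ {z : ℂ | z.im = 0} := by
  obtain rfl : e = basisVec := funext he
  obtain ⟨V', hV'⟩ := exists_isometry (fun n => 2 * n) (fun i j h => by simpa using h)
  obtain ⟨W', hW'⟩ := exists_isometry (fun n => 2 * n + 1) (fun i j h => by simpa using h)
  set V : Seq →L[ℂ] Seq := V'.toContinuousLinearMap with hVdef
  set W : Seq →L[ℂ] Seq := W'.toContinuousLinearMap with hWdef
  have hV (n) : V (basisVec n) = basisVec (2 * n) := hV' n
  have hW (n) : W (basisVec n) = basisVec (2 * n + 1) := hW' n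
  set P := adjoint V with hP
  set Q := adjoint W with hQ
  have horth := orthonormal_iff_ite.mp orthonormal_basisVec
  have hPe (n) : P (basisVec (2 * n)) = basisVec n :=
    ext_inner_basisVec fun i => by
      rw [hP, adjoint_inner_right, hV, horth, horth]
      simp
  have hPo (n) : P (basisVec (2 * n + 1)) = 0 :=
    ext_inner_basisVec fun i => by
      rw [hP, adjoint_inner_right, hV, horth, inner_zero_right, if_neg (by omega)]
  have hQo (n) : Q (basisVec (2 * n + 1)) = basisVec n :=
    ext_inner_basisVec fun i => by
      rw [hQ, adjoint_inner_right, hW, horth, horth]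
      simp
  have hQe (n) : Q (basisVec (2 * n)) = 0 :=
    ext_inner_basisVec fun i => by
      rw [hQ, adjoint_inner_right, hW, horth, inner_zero_right, if_neg (by omega)]
  have hpv : P * V = 1 := clm_ext fun n => by
    simp only [mul_def, comp_apply, one_def, id_apply, hV, hPe]
  have hqw : Q * W = 1 := clm_ext fun n => by
    simp only [mul_def, comp_apply, one_def, id_apply, hW, hQo]
  have hpw : P * W = 0 := clm_ext fun n => by simp only [mul_def, comp_apply, zero_apply, hW, hPo]
  have hqv : Q * V = 0 := clm_ext fun n => by simp only [mul_def, comp_apply, zero_apply, hV, hQe]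
  have hvw : V * P + W * Q = 1 := clm_ext fun n => by
    rcases Nat.even_or_odd' n with ⟨k, rfl | rfl⟩
    · simp only [add_apply, mul_def, comp_apply, one_def, id_apply, hPe, hQe, hV, map_zero,
        add_zero]
    · simp only [add_apply, mul_def, comp_apply, one_def, id_apply, hPo, hQo, hW, map_zero,
        zero_add]
  have hBeq : B = V * Q + W * A * P := clm_ext fun n => by
    rcases Nat.even_or_odd' n with ⟨k, rfl | rfl⟩
    · rcases k with _ | k
      · simp only [add_apply, mul_def, comp_apply, hPe, hQe, map_zero, zero_add, hA0,
          map_add, map_smul, hW]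
        exact hB0
      · simp only [add_apply, mul_def, comp_apply, hPe, hQe, map_zero, zero_add, hA,
          map_add, map_smul, hW]
        exact hBeven k
    · simp only [add_apply, mul_def, comp_apply, hPo, hQo, map_zero, add_zero, hV, hBodd]
  have hGeq : G = V * Q + W * P := clm_ext fun n => by
    rcases Nat.even_or_odd' n with ⟨k, rfl | rfl⟩
    · simp only [add_apply, mul_def, comp_apply, hPe, hQe, map_zero, zero_add, hW, hGeven]
    · simp only [add_apply, mul_def, comp_apply, hPo, hQo, map_zero, add_zero, hV, hGodd]
  have hGB (x : Seq) : (G ∘L B) x = V (A (P x)) + W (Q x) := by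
    have h1 (y) : P (V y) = y := DFunLike.congr_fun hpv y
    have h2 (y) : Q (W y) = y := DFunLike.congr_fun hqw y
    have h3 (y) : P (W y) = 0 := DFunLike.congr_fun hpw y
    have h4 (y) : Q (V y) = 0 := DFunLike.congr_fun hqv y
    simp only [hGeq, hBeq, comp_apply, add_apply, mul_def, map_add, h1, h2, h3, h4, map_zero,
      zero_add, add_zero]
    exact add_comm _ _
  have hspec : spectrum ℂ B = {z : ℂ | z ^ 2 ∈ spectrum ℂ A} := by
    ext z
    rw [Set.mem_ofPred_eq, spectrum.mem_iff, spectrum.mem_iff, hBeq,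
      isUnit_sub_iff hpv hqw hpw hqv hvw]
  refine ⟨fun x => ?_, hspec, ?_⟩
  · rw [hGB, inner_add_left, Complex.add_re, ← adjoint_inner_right V,
      ← adjoint_inner_right W]
    exact add_nonneg (hApos _).2 (inner_self_nonneg (𝕜 := ℂ) (x := Q x))
  · rw [hspec]
    intro z hz
    rw [Set.mem_ofPred_eq] at hz
    have hpos : A.IsPositive := by
      rw [isPositive_iff_complex]
      intro x
      exact ⟨Complex.ext (by simp) (by simpa using (hApos x).1.symm), (hApos x).2⟩
    have hre := hpos.isSelfAdjoint.mem_spectrum_eq_re hz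
    have hz' : (z ^ 2).re ∈ spectrum ℝ A := by
      rw [← spectrum.algebraMap_mem_iff ℂ]
      rw [hre] at hz
      exact hz
    have h0 : 0 ≤ (z ^ 2).re :=
      spectrum_nonneg_of_nonneg ((nonneg_iff_isPositive A).mpr hpos) hz'
    have him : (z ^ 2).im = 0 := by rw [hre]; simp
    -- `z²` is real and nonnegative: `re z * im z = 0` and `(im z)² ≤ (re z)²`.
    simp only [pow_two, Complex.mul_re, Complex.mul_im] at h0 him
    have : z.re = 0 ∨ z.im = 0 := by
      rw [← mul_eq_zero]; linarith
    rcases this with h | h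
    · rw [h] at h0
      exact mul_self_eq_zero.mp (le_antisymm (by linarith) (mul_self_nonneg z.im))
    · exact h
end
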